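/- arXiv:1206.5159 — 3 statements merged into one kernel-verified Lean document; each statement's English description precedes it below -/
import Mathlib

section
/- For every integer k ≥ 0, there exists a simple graph that has a representation as an intersection graph of straight line segments in the plane using at most 3 distinct slopes (i.e., a 3-DIR graph), but has no B_k-VPG representation. Consequently, there is no k for which SEG ⊆ B_k-VPG. -/
/-!
The graph witnessing the theorem is the intersection graph of a large triangular grid: horizontal
segments `h i`, vertical segments `v j` and diagonal segments `d m`, together with a very short
segment `t i j` at each grid point, which meets exactly `h i`, `v j` and `d (i + j)`.

Suppose that it has a representation by axis-parallel curves with at most `k + 1` straight pieces.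
Colour the grid point `(i, j)` by the numbers of the pieces of `h i`, `v j`, `d (i + j)` that are
met by `t i j`, by the orientations of these three pieces, and by the information which of them
meet each other. By the Hales–Jewett theorem (`exists_mono_grid`) there is a monochromatic
homothetic copy of a 6 × 6 grid, so that on this copy every long curve may be replaced by a single
axis-parallel segment. Two of the three families of segments, say `A` and `B`, have the same
orientation. If every `A i` meets every `B j`, then two of the `A i` and two of the `B j` form an
induced four-cycle of intervals on a line, which is impossible (`no_parallel_C4`). Otherwise all
`A i` are disjoint from all `B j`, and the pairwise disjoint curves `t` joining them draw `K₃,₃` in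
the plane, which is impossible as well (`no_planar_K33`).

The non-planarity of `K₃,₃` is proved by counting modulo 2, for rectilinear walks with vertices in
a product of two linear orders. For disjoint walks `w`, `W` the number of edges of `w` above an
endpoint of `W`, plus the number of edges of `W` below an endpoint of `w`, summed over all the
endpoints, is even (`walk_parity`). Summing this over the pairs of disjoint edges of `K₃,₃`, almost
everything cancels, and the number of pairs among the three vertices `b j`, which is odd,
remains. Here the `b j` must not lie on the vertical line of another vertex; this is arranged by an
infinitesimal horizontal shift, that is, by working in `(ℝ ×ₗ ℕ) × ℝ`.
-/

open Set Metric

/-- A point of the plane. -/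
abbrev Pt : Type := ℝ × ℝ

/-- The trace (image) of a curve parametrized over `[0,1]`. -/
def Im (γ : ℝ → Pt) : Set Pt := γ '' Icc 0 1

/-- `γ` is affine on the interval `[s,t]`. -/
def AffOn (γ : ℝ → Pt) (s t : ℝ) : Prop :=
  ∃ a d : Pt, ∀ x ∈ Icc s t, γ x = (a.1 + x * d.1, a.2 + x * d.2)

/-- `γ` is affine on `[s,t]` with a horizontal or vertical direction. -/
def AxisAffOn (γ : ℝ → Pt) (s t : ℝ) : Prop :=
  ∃ a d : Pt, (d.1 = 0 ∨ d.2 = 0) ∧ ∀ x ∈ Icc s t, γ x = (a.1 + x * d.1, a.2 + x * d.2)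

/-- `γ` restricted to `[0,1]` is a simple piecewise linear curve consisting of at most
`n` straight segments. -/
def IsPLCurveN (n : ℕ) (γ : ℝ → Pt) : Prop :=
  InjOn γ (Icc 0 1) ∧
    ∃ t : Fin (n + 1) → ℝ, t 0 = 0 ∧ t (Fin.last n) = 1 ∧ Monotone t ∧
      ∀ i : Fin n, AffOn γ (t i.castSucc) (t i.succ)

/-- `γ` is a simple piecewise linear curve (finitely many segments). -/
def IsPLCurve (γ : ℝ → Pt) : Prop := ∃ n, IsPLCurveN n γ

/-- `γ` restricted to `[0,1]` is a simple rectilinear (axis-parallel) curve consisting of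
at most `n` horizontal or vertical straight segments. -/
def IsRectCurveN (n : ℕ) (γ : ℝ → Pt) : Prop :=
  InjOn γ (Icc 0 1) ∧
    ∃ t : Fin (n + 1) → ℝ, t 0 = 0 ∧ t (Fin.last n) = 1 ∧ Monotone t ∧
      ∀ i : Fin n, AxisAffOn γ (t i.castSucc) (t i.succ)

/-- `γ` is a simple rectilinear (axis-parallel) piecewise linear curve. -/
def IsRectCurve (γ : ℝ → Pt) : Prop := ∃ n, IsRectCurveN n γ

/-- A `k`-bend axis-parallel curve: a simple curve that is a concatenation of at most
`k+1` horizontal or vertical straight segments (hence has at most `k` bends). -/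
def IsKBendCurve (k : ℕ) (γ : ℝ → Pt) : Prop := IsRectCurveN (k + 1) γ

/-- `R` is an intersection representation of `G` by curves:
two distinct vertices are adjacent iff their curves meet. -/
def Represents {V : Type*} (G : SimpleGraph V) (R : V → ℝ → Pt) : Prop :=
  ∀ u v : V, u ≠ v → ((Im (R u) ∩ Im (R v)).Nonempty ↔ G.Adj u v)

/-- The set of intersection points of a representation: points lying on (at least)
two distinct curves. -/
def InPts {V : Type*} (R : V → ℝ → Pt) : Set Pt :=
  {p | ∃ u v : V, u ≠ v ∧ p ∈ Im (R u) ∧ p ∈ Im (R v)}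

/-- The set `B` crosses (transversally, from one side to the other) the set `A` at `p`:
in every small ball around `p` there are points of `B` off `A` that cannot be joined by a
connected subset of the ball avoiding `A`. -/
def CrossesAt (A B : Set Pt) (p : Pt) : Prop :=
  ∃ ε₀ > (0:ℝ), ∀ ε : ℝ, 0 < ε → ε ≤ ε₀ →
    ∃ x y : Pt, x ∈ (B ∩ ball p ε) \ A ∧ y ∈ (B ∩ ball p ε) \ A ∧
      ∀ C : Set Pt, C ⊆ ball p ε \ A → IsConnected C → ¬(x ∈ C ∧ y ∈ C)

/-- A proper representation: finitely many intersection points (in particular no two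
curves overlap), every intersection point lies on exactly two curves which cross
(do not touch) there, and no endpoint of a curve lies on another curve. -/
def IsProperRep {V : Type*} (R : V → ℝ → Pt) : Prop :=
  (InPts R).Finite ∧
    (∀ p : Pt, ∀ u v w : V, u ≠ v → u ≠ w → v ≠ w →
      ¬(p ∈ Im (R u) ∧ p ∈ Im (R v) ∧ p ∈ Im (R w))) ∧
    (∀ u v : V, u ≠ v → R u 0 ∉ Im (R v) ∧ R u 1 ∉ Im (R v)) ∧
    (∀ u v : V, u ≠ v → ∀ p ∈ Im (R u) ∩ Im (R v),
      CrossesAt (Im (R u)) (Im (R v)) p ∧ CrossesAt (Im (R v)) (Im (R u)) p)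

/-- Membership in the class `B_k`-VPG. -/
def InBkVPG (k : ℕ) {V : Type*} (G : SimpleGraph V) : Prop :=
  ∃ R : V → ℝ → Pt, (∀ v, IsKBendCurve k (R v)) ∧ Represents G R

/-- Membership in the class SEG of intersection graphs of straight line segments. -/
def InSEG {V : Type*} (G : SimpleGraph V) : Prop :=
  ∃ S : V → Pt × Pt, (∀ v, (S v).1 ≠ (S v).2) ∧
    ∀ u v : V, u ≠ v →
      ((segment ℝ (S u).1 (S u).2 ∩ segment ℝ (S v).1 (S v).2).Nonempty ↔ G.Adj u v)

/-- Membership in the class 3-DIR: intersection graphs of straight line segments using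
at most three distinct directions (slopes). -/
def In3DIR {V : Type*} (G : SimpleGraph V) : Prop :=
  ∃ D : Fin 3 → Pt, ∃ S : V → Pt × Pt,
    (∀ v, (S v).1 ≠ (S v).2) ∧
    (∀ v, ∃ i : Fin 3, ∃ c : ℝ, (S v).2 - (S v).1 = c • D i) ∧
    ∀ u v : V, u ≠ v →
      ((segment ℝ (S u).1 (S u).2 ∩ segment ℝ (S v).1 (S v).2).Nonempty ↔ G.Adj u v)

/-- `L` is a (straight) line in the plane. -/
def IsLine (L : Set Pt) : Prop :=
  ∃ p d : Pt, d ≠ 0 ∧ L = {x : Pt | ∃ r : ℝ, x = (p.1 + r * d.1, p.2 + r * d.2)}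

/-- `z` is a bend point of the set `S` (trace of a curve): `S` is not locally straight
at `z`, i.e. no neighbourhood of `z` in `S` is contained in a line. -/
def IsBendPt (S : Set Pt) (z : Pt) : Prop :=
  z ∈ S ∧ ∀ ε > (0:ℝ), ¬ ∃ L : Set Pt, IsLine L ∧ S ∩ ball z ε ⊆ L

/-! ### Parity of crossings and the non-planarity of `K₃,₃` -/

section Parity

variable {X Y : Type*} [LinearOrder X] [LinearOrder Y]

/-- `p` and `q` are the ends of a horizontal or vertical segment (the box they span is degenerate)
contained in `S`. -/
def Step (S : Set (X × Y)) (p q : X × Y) : Prop :=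
  (p.1 = q.1 ∨ p.2 = q.2) ∧ ∀ z : X × Y, z.1 ∈ uIcc p.1 q.1 → z.2 ∈ uIcc p.2 q.2 → z ∈ S

/-- The truth value of `a < b`, as an element of `ZMod 2`. -/
def lt2 {L : Type*} [LinearOrder L] (a b : L) : ZMod 2 := if a < b then 1 else 0

/-- The sum detects whether `c` separates `a` from `b`; boundary cases only matter for the
converse, which is false in general. -/
theorem lt2_add_left {L : Type*} [LinearOrder L] {a b c : L}
    (h : lt2 a c + lt2 b c ≠ 0) : c ∈ uIcc a b := by
  unfold lt2 at h
  rw [mem_uIcc]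
  by_cases h1 : a < c <;> by_cases h2 : b < c <;> simp_all
  · exact absurd rfl h
  · exact Or.inl h1.le
  · exact Or.inr h2.le

theorem lt2_add_right {L : Type*} [LinearOrder L] {a b c : L}
    (h : lt2 c a + lt2 c b ≠ 0) : c ∈ uIcc a b := by
  unfold lt2 at h
  rw [mem_uIcc]
  by_cases h1 : c < a <;> by_cases h2 : c < b <;> simp_all
  · exact absurd rfl h
  · exact Or.inr h1.le
  · exact Or.inl h2.le

theorem lt2_swap {L : Type*} [LinearOrder L] {a b : L} (h : a ≠ b) :
    lt2 a b + lt2 b a = 1 := by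
  unfold lt2
  rcases lt_or_gt_of_ne h with h | h <;> simp [h, not_lt.2 h.le]

/-- The number modulo 2 of edges of the rectilinear walk `w 0, …, w n` that lie above `P`. Vertical
edges contribute `0`, because their ends have the same first coordinate. -/
def above (w : ℕ → X × Y) (n : ℕ) (P : X × Y) : ZMod 2 :=
  ∑ s ∈ Finset.range n, (lt2 (w s).1 P.1 + lt2 (w (s + 1)).1 P.1) * lt2 P.2 (w s).2

/-- The number modulo 2 of edges of the rectilinear walk `w 0, …, w n` that lie below `p`. -/
def below (w : ℕ → X × Y) (n : ℕ) (p : X × Y) : ZMod 2 :=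
  ∑ s ∈ Finset.range n, (lt2 p.1 (w s).1 + lt2 p.1 (w (s + 1)).1) * lt2 (w s).2 p.2

theorem telescope (f : ℕ → ZMod 2) (n : ℕ) :
    ∑ s ∈ Finset.range n, (f s + f (s + 1)) = f 0 + f n := by
  induction n with
  | zero => simp [CharTwo.add_self_eq_zero]
  | succ n ih =>
    rw [Finset.sum_range_succ, ih]
    linear_combination CharTwo.add_self_eq_zero (f n)

/-- The case of single edges in `walk_parity`: for two perpendicular edges the sum is the indicator
of a crossing, for two parallel ones every term occurs twice. -/
theorem edge_parity {E F : Set (X × Y)} (hEF : Disjoint E F) {p p' P P' : X × Y}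
    (h : Step E p p') (H : Step F P P') :
    (lt2 p.1 P.1 + lt2 p'.1 P.1) * lt2 P.2 p.2 + (lt2 p.1 P'.1 + lt2 p'.1 P'.1) * lt2 P'.2 p.2
      + ((lt2 p.1 P.1 + lt2 p.1 P'.1) * lt2 P.2 p.2
      + (lt2 p'.1 P.1 + lt2 p'.1 P'.1) * lt2 P.2 p'.2) = 0 := by
  have two : (2 : ZMod 2) = 0 := rfl
  obtain ⟨h0, h1⟩ := h
  obtain ⟨H0, H1⟩ := H
  rcases h0 with h0 | h0 <;> rcases H0 with H0 | H0
  · rw [← h0, ← H0]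
    linear_combination (2 * lt2 p.1 P.1 * lt2 P.2 p.2 + lt2 p.1 P.1 * lt2 P'.2 p.2 +
      lt2 p.1 P.1 * lt2 P.2 p'.2) * two
  · have key : (lt2 p.1 P.1 + lt2 p.1 P'.1) * (lt2 P.2 p.2 + lt2 P.2 p'.2) = 0 := by
      by_contra hne
      have hx := lt2_add_right (left_ne_zero_of_mul hne)
      have hy := lt2_add_right (right_ne_zero_of_mul hne)
      exact disjoint_left.1 hEF (h1 (p.1, P.2) left_mem_uIcc hy)
        (H1 (p.1, P.2) hx left_mem_uIcc)
    rw [← h0, ← H0]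
    linear_combination key + (lt2 p.1 P.1 + lt2 p.1 P'.1) * lt2 P.2 p.2 * two
  · have key : (lt2 p.1 P.1 + lt2 p'.1 P.1) * (lt2 P.2 p.2 + lt2 P'.2 p.2) = 0 := by
      by_contra hne
      have hx := lt2_add_left (left_ne_zero_of_mul hne)
      have hy := lt2_add_left (right_ne_zero_of_mul hne)
      exact disjoint_left.1 hEF (h1 (P.1, p.2) hx left_mem_uIcc)
        (H1 (P.1, p.2) left_mem_uIcc hy)
    rw [← h0, ← H0]
    linear_combination key + (lt2 p.1 P.1 + lt2 p'.1 P.1) * lt2 P.2 p.2 * two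
  · rw [← h0, ← H0]
    linear_combination (lt2 p.1 P.1 + lt2 p'.1 P.1 + lt2 p.1 P'.1 + lt2 p'.1 P'.1) *
      lt2 P.2 p.2 * two

/-- The parity identity for disjoint walks. Without disjointness the left-hand side would be the
number of crossings modulo 2. -/
theorem walk_parity {E F : Set (X × Y)} (hEF : Disjoint E F) {w W : ℕ → X × Y} {n m : ℕ}
    (hw : ∀ s < n, Step E (w s) (w (s + 1))) (hW : ∀ s < m, Step F (W s) (W (s + 1))) :
    above w n (W 0) + above w n (W m) + (below W m (w 0) + below W m (w n)) = 0 := by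
  rw [← telescope (fun t => above w n (W t)), ← telescope (fun s => below W m (w s))]
  simp only [above, below, ← Finset.sum_add_distrib]
  rw [Finset.sum_comm]
  rw [← Finset.sum_add_distrib]
  refine Finset.sum_eq_zero fun s hs => ?_
  rw [← Finset.sum_add_distrib]
  refine Finset.sum_eq_zero fun t ht => ?_
  exact edge_parity hEF (hw s (Finset.mem_range.1 hs)) (hW t (Finset.mem_range.1 ht))

/-- If `P` is not on the walk, each edge across the vertical line through `P` is either above or
below `P`, and the parity of the number of these edges is determined by the ends of the walk. -/
theorem above_add_below {E : Set (X × Y)} {w : ℕ → X × Y} {n : ℕ}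
    (hw : ∀ s < n, Step E (w s) (w (s + 1))) {P : X × Y} (hP : P ∉ E)
    (hne : ∀ s ≤ n, (w s).1 ≠ P.1) :
    above w n P + below w n P = lt2 (w 0).1 P.1 + lt2 (w n).1 P.1 := by
  rw [← telescope (fun s => lt2 (w s).1 P.1)]
  simp only [above, below, ← Finset.sum_add_distrib]
  refine Finset.sum_congr rfl fun s hs => ?_
  have hs := Finset.mem_range.1 hs
  have two : (2 : ZMod 2) = 0 := rfl
  have e1 := lt2_swap (hne s hs.le)
  have e2 := lt2_swap (hne (s + 1) hs)
  have e3 : lt2 P.1 (w s).1 + lt2 P.1 (w (s + 1)).1 =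
      lt2 (w s).1 P.1 + lt2 (w (s + 1)).1 P.1 := by
    linear_combination e1 + e2 +
      (1 - lt2 (w s).1 P.1 - lt2 (w (s + 1)).1 P.1) * two
  rw [e3, ← mul_add]
  by_cases hg : lt2 (w s).1 P.1 + lt2 (w (s + 1)).1 P.1 = 0
  · rw [hg, zero_mul]
  · have : P.2 ≠ (w s).2 := fun hy =>
      hP ((hw s hs).2 P (lt2_add_left hg) (hy ▸ left_mem_uIcc))
    rw [lt2_swap this, mul_one]

/-- `K₃,₃` with vertices `a i`, `b j` and edges `w i j` cannot be drawn so that edges without a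
common vertex are disjoint. By `hx` no vertex of a walk is on the vertical line through some `b l`
which is not its end. -/
theorem no_planar_K33 (E : Fin 3 → Fin 3 → Set (X × Y)) (a b : Fin 3 → X × Y)
    (w : Fin 3 → Fin 3 → ℕ → X × Y) (n : Fin 3 → Fin 3 → ℕ)
    (h0 : ∀ i j, w i j 0 = a i) (hn : ∀ i j, w i j (n i j) = b j)
    (hw : ∀ i j, ∀ s < n i j, Step (E i j) (w i j s) (w i j (s + 1)))
    (hE : ∀ i j k l, i ≠ k → j ≠ l → Disjoint (E i j) (E k l))
    (hb : ∀ i j l, j ≠ l → b l ∉ E i j)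
    (hx : ∀ i j l, j ≠ l → ∀ s ≤ n i j, (w i j s).1 ≠ (b l).1) : False := by
  have two : (2 : ZMod 2) = 0 := rfl
  have key : ∀ i k j l, i ≠ k → j ≠ l →
      above (w i j) (n i j) (a k) + above (w i j) (n i j) (b l)
        + (below (w k l) (n k l) (a i) + below (w k l) (n k l) (b j)) = 0 := by
    intro i k j l hik hjl
    have := walk_parity (hE i j k l hik hjl) (hw i j) (hw k l)
    rwa [h0, hn, h0, hn] at this
  have tel : ∀ j l, j ≠ l → above (w 1 j) (n 1 j) (b l) + below (w 1 j) (n 1 j) (b l) =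
      lt2 (a 1).1 (b l).1 + lt2 (b j).1 (b l).1 := by
    intro j l hjl
    have := above_add_below (hw 1 j) (hb 1 j l hjl) (hx 1 j l hjl)
    rwa [h0, hn] at this
  have sw : ∀ j l, j ≠ l → lt2 (b j).1 (b l).1 + lt2 (b l).1 (b j).1 = 1 := by
    intro j l hjl
    refine lt2_swap ?_
    have := hx 0 j l hjl _ le_rfl
    rwa [hn] at this
  -- `sA i` and `sB i` add up the parities over all pairs `j ≠ l`; in each of these sums every
  -- term whose base point is one of the `a k` occurs exactly twice.
  obtain ⟨sA, hA⟩ : ∃ sA : Fin 3 → ZMod 2, ∀ i, sA i =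
      above (w i 0) (n i 0) (b 1) + above (w i 0) (n i 0) (b 2) + above (w i 1) (n i 1) (b 0)
      + above (w i 1) (n i 1) (b 2) + above (w i 2) (n i 2) (b 0) + above (w i 2) (n i 2) (b 1) :=
    ⟨_, fun _ => rfl⟩
  obtain ⟨sB, hB⟩ : ∃ sB : Fin 3 → ZMod 2, ∀ i, sB i =
      below (w i 0) (n i 0) (b 1) + below (w i 0) (n i 0) (b 2) + below (w i 1) (n i 1) (b 0)
      + below (w i 1) (n i 1) (b 2) + below (w i 2) (n i 2) (b 0) + below (w i 2) (n i 2) (b 1) :=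
    ⟨_, fun _ => rfl⟩
  have d01 : (0 : Fin 3) ≠ 1 := by decide
  have d02 : (0 : Fin 3) ≠ 2 := by decide
  have d12 : (1 : Fin 3) ≠ 2 := by decide
  have sumkey : ∀ i k, i ≠ k → sA i + sB k = 0 := by
    intro i k hik
    have e := fun j l (h : j ≠ l) => key i k j l hik h
    rw [hA, hB]
    linear_combination e 0 1 d01 + e 0 2 d02 + e 1 0 d01.symm + e 1 2 d12 + e 2 0 d02.symm
      + e 2 1 d12.symm
      - (above (w i 0) (n i 0) (a k) + above (w i 1) (n i 1) (a k) + above (w i 2) (n i 2) (a k)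
        + below (w k 0) (n k 0) (a i) + below (w k 1) (n k 1) (a i)
        + below (w k 2) (n k 2) (a i)) * two
  have total : sA 1 + sB 1 = 1 := by
    rw [hA, hB]
    linear_combination tel 0 1 d01 + tel 0 2 d02 + tel 1 0 d01.symm + tel 1 2 d12
      + tel 2 0 d02.symm + tel 2 1 d12.symm + sw 0 1 d01 + sw 0 2 d02 + sw 1 2 d12
      + (lt2 (a 1).1 (b 0).1 + lt2 (a 1).1 (b 1).1 + lt2 (a 1).1 (b 2).1 + 1) * two
  have : (1 : ZMod 2) = 0 := by
    linear_combination sumkey 0 1 d01 + sumkey 1 2 d12 + sumkey 0 2 d02 - total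
      - (sA 0 + sB 2) * two
  exact absurd this (by decide)

end Parity

/-! ### Rectilinear connections in the real plane -/

section Plane

theorem Step.symm {X Y : Type*} [LinearOrder X] [LinearOrder Y] {S : Set (X × Y)} {p q : X × Y}
    (h : Step S p q) : Step S q p := by
  refine ⟨h.1.imp Eq.symm Eq.symm, fun z h1 h2 => h.2 z ?_ ?_⟩
  · rwa [uIcc_comm]
  · rwa [uIcc_comm]

/-- `p` and `q` are joined by a rectilinear walk inside `S`. -/
def RectJoined (S : Set Pt) : Pt → Pt → Prop := Relation.ReflTransGen (Step S)

theorem RectJoined.mono {S T : Set Pt} (h : S ⊆ T) {p q : Pt} (hpq : RectJoined S p q) :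
    RectJoined T p q := by
  induction hpq with
  | refl => exact Relation.ReflTransGen.refl
  | tail _ hs ih =>
    exact Relation.ReflTransGen.tail ih ⟨hs.1, fun z h1 h2 => h (hs.2 z h1 h2)⟩

theorem RectJoined.symm {S : Set Pt} {p q : Pt} (hpq : RectJoined S p q) : RectJoined S q p := by
  induction hpq with
  | refl => exact Relation.ReflTransGen.refl
  | tail _ hs ih => exact Relation.ReflTransGen.head hs.symm ih

theorem RectJoined.exists_walk {S : Set Pt} {p q : Pt} (h : RectJoined S p q) :
    ∃ (n : ℕ) (w : ℕ → Pt), w 0 = p ∧ w n = q ∧ ∀ s < n, Step S (w s) (w (s + 1)) := by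
  induction h with
  | refl => exact ⟨0, fun _ => p, rfl, rfl, by simp⟩
  | @tail b c _ hbc ih =>
    obtain ⟨n, w, h0, hn, hs⟩ := ih
    refine ⟨n + 1, fun s => if s ≤ n then w s else c, by simpa using h0, by simp, ?_⟩
    intro s hsn
    rcases Nat.lt_succ_iff_lt_or_eq.1 hsn with h | rfl
    · simpa [h.le, Nat.succ_le_of_lt h] using hs s h
    · simpa [hn] using hbc

/-- The plane with infinitesimal horizontal shifts, recorded by the natural number. -/
abbrev LexPlane : Type := (ℝ ×ₗ ℕ) × ℝ

/-- Forget the infinitesimal shift. -/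
def proj (z : LexPlane) : Pt := ((ofLex z.1).1, z.2)

theorem fst_mem_uIcc {z p q : ℝ ×ₗ ℕ} (h : z ∈ uIcc p q) :
    (ofLex z).1 ∈ uIcc (ofLex p).1 (ofLex q).1 := by
  have mono : ∀ {x y : ℝ ×ₗ ℕ}, x ≤ y → (ofLex x).1 ≤ (ofLex y).1 := by
    intro x y hxy
    rcases Prod.Lex.le_iff.1 hxy with h | h
    · exact h.le
    · exact h.1.le
  rw [mem_uIcc] at h ⊢
  exact h.imp (fun h => ⟨mono h.1, mono h.2⟩) (fun h => ⟨mono h.1, mono h.2⟩)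

/-- `no_planar_K33` without the general position assumption: each walk gets a last edge, which
shifts its end `b j` horizontally by `j + 1` infinitesimal units. -/
theorem no_planar_K33_joined (E : Fin 3 → Fin 3 → Set Pt) (a b : Fin 3 → Pt)
    (hJ : ∀ i j, RectJoined (E i j) (a i) (b j))
    (hE : ∀ i j k l, i ≠ k → j ≠ l → Disjoint (E i j) (E k l))
    (hbm : ∀ i j, b j ∈ E i j)
    (hb : ∀ i j l, j ≠ l → b l ∉ E i j) : False := by
  choose n w h0 hn hs using fun i j => (hJ i j).exists_walk
  refine no_planar_K33 (X := ℝ ×ₗ ℕ) (Y := ℝ) (fun i j => proj ⁻¹' E i j)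
    (fun i => (toLex ((a i).1, 0), (a i).2))
    (fun j => (toLex ((b j).1, (j : ℕ) + 1), (b j).2))
    (fun i j s => if s ≤ n i j then (toLex ((w i j s).1, 0), (w i j s).2) else
      (toLex ((b j).1, (j : ℕ) + 1), (b j).2))
    (fun i j => n i j + 1) ?_ ?_ ?_ ?_ ?_ ?_
  · intro i j; simp [h0]
  · intro i j; simp
  · intro i j s hsn
    rcases Nat.lt_succ_iff_lt_or_eq.1 hsn with h | rfl
    · have := hs i j s h
      simp only [h.le, Nat.succ_le_of_lt h, if_true]
      refine ⟨this.1.imp (fun h => by simp [h]) (fun h => h), fun z h1 h2 => ?_⟩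
      exact this.2 _ (fst_mem_uIcc h1) h2
    · simp only [le_refl, if_true, hn]
      refine ⟨Or.inr (by simp), fun z h1 h2 => ?_⟩
      have h1 := fst_mem_uIcc h1
      simp at h1 h2
      have : proj z = b j := Prod.ext h1 h2
      rw [mem_preimage, this]
      exact hbm i j
  · intro i j k l hik hjl
    exact (hE i j k l hik hjl).preimage _
  · intro i j l hjl
    exact hb i j l hjl
  · intro i j l hjl s hsn heq
    have heq := congrArg (fun z => (ofLex z).2) heq
    dsimp only at heq
    split_ifs at heq
    · simp at heq
    · simp at heq
      exact hjl (Fin.ext heq)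

/-- All points of `P` are on one horizontal line. -/
def Hor (P : Set Pt) : Prop := ∀ p ∈ P, ∀ q ∈ P, p.2 = q.2

/-- All points of `P` are on one vertical line. -/
def Ver (P : Set Pt) : Prop := ∀ p ∈ P, ∀ q ∈ P, p.1 = q.1

/-- Any two points of `P` are the ends of a horizontal or vertical segment inside `P`; so `P` is
itself a horizontal or vertical segment. -/
def StepConn (P : Set Pt) : Prop := ∀ p ∈ P, ∀ q ∈ P, Step P p q

/-- The four-cycle is not an interval graph. -/
theorem interval_C4 {x₁ x₂ x₃ x₄ : ℝ} {A₁ A₂ B₁ B₂ : Set ℝ}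
    (hA₁ : OrdConnected A₁) (hA₂ : OrdConnected A₂) (hB₁ : OrdConnected B₁)
    (hB₂ : OrdConnected B₂) (h₁ : x₁ ∈ A₁ ∩ B₁) (h₂ : x₂ ∈ A₁ ∩ B₂) (h₃ : x₃ ∈ A₂ ∩ B₁)
    (h₄ : x₄ ∈ A₂ ∩ B₂) (hA : Disjoint A₁ A₂) (hB : Disjoint B₁ B₂) : False := by
  have a₁ : ∀ z, z ∈ uIcc x₁ x₂ → z ∈ A₁ := fun z hz => hA₁.uIcc_subset h₁.1 h₂.1 hz
  have a₂ : ∀ z, z ∈ uIcc x₃ x₄ → z ∈ A₂ := fun z hz => hA₂.uIcc_subset h₃.1 h₄.1 hz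
  have b₁ : ∀ z, z ∈ uIcc x₁ x₃ → z ∈ B₁ := fun z hz => hB₁.uIcc_subset h₁.2 h₃.2 hz
  have b₂ : ∀ z, z ∈ uIcc x₂ x₄ → z ∈ B₂ := fun z hz => hB₂.uIcc_subset h₂.2 h₄.2 hz
  have hA' : ∀ z, z ∈ uIcc x₁ x₂ → z ∉ uIcc x₃ x₄ := fun z h h' =>
    disjoint_left.1 hA (a₁ z h) (a₂ z h')
  have hB' : ∀ z, z ∈ uIcc x₁ x₃ → z ∉ uIcc x₂ x₄ := fun z h h' =>
    disjoint_left.1 hB (b₁ z h) (b₂ z h')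
  have p1 := hA' x₁ left_mem_uIcc
  have p2 := hA' x₂ right_mem_uIcc
  have p3 := fun h => hA' x₃ h left_mem_uIcc
  have p4 := fun h => hA' x₄ h right_mem_uIcc
  have q1 := hB' x₁ left_mem_uIcc
  have q2 := hB' x₃ right_mem_uIcc
  have q3 := fun h => hB' x₂ h left_mem_uIcc
  have q4 := fun h => hB' x₄ h right_mem_uIcc
  simp only [mem_uIcc] at p1 p2 p3 p4 q1 q2 q3 q4
  grind

theorem StepConn.ordConnected_fst {P : Set Pt} (h : StepConn P) (c : ℝ) :
    OrdConnected {x : ℝ | (x, c) ∈ P} := by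
  refine ⟨fun x hx y hy z hz => (h _ hx _ hy).2 (z, c) ?_ ?_⟩
  · exact Icc_subset_uIcc hz
  · simp

theorem StepConn.ordConnected_snd {P : Set Pt} (h : StepConn P) (c : ℝ) :
    OrdConnected {y : ℝ | (c, y) ∈ P} := by
  refine ⟨fun x hx y hy z hz => (h _ hx _ hy).2 (c, z) ?_ ?_⟩
  · simp
  · exact Icc_subset_uIcc hz

theorem no_parallel_C4 {A₁ A₂ B₁ B₂ : Set Pt}
    (hA₁ : StepConn A₁) (hA₂ : StepConn A₂) (hB₁ : StepConn B₁) (hB₂ : StepConn B₂)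
    (ho : (Hor A₁ ∧ Hor A₂ ∧ Hor B₁ ∧ Hor B₂) ∨ (Ver A₁ ∧ Ver A₂ ∧ Ver B₁ ∧ Ver B₂))
    (h₁ : (A₁ ∩ B₁).Nonempty) (h₂ : (A₁ ∩ B₂).Nonempty) (h₃ : (A₂ ∩ B₁).Nonempty)
    (h₄ : (A₂ ∩ B₂).Nonempty) (hA : Disjoint A₁ A₂) (hB : Disjoint B₁ B₂) : False := by
  obtain ⟨⟨x₁, y₁⟩, h₁⟩ := h₁
  obtain ⟨⟨x₂, y₂⟩, h₂⟩ := h₂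
  obtain ⟨⟨x₃, y₃⟩, h₃⟩ := h₃
  obtain ⟨⟨x₄, y₄⟩, h₄⟩ := h₄
  rcases ho with ⟨oA₁, oA₂, oB₁, oB₂⟩ | ⟨oA₁, oA₂, oB₁, oB₂⟩
  · obtain rfl : y₁ = y₂ := oA₁ _ h₁.1 _ h₂.1
    obtain rfl : y₁ = y₃ := oB₁ _ h₁.2 _ h₃.2
    obtain rfl : y₁ = y₄ := oB₂ _ h₂.2 _ h₄.2
    exact interval_C4 (hA₁.ordConnected_fst y₁) (hA₂.ordConnected_fst y₁)
      (hB₁.ordConnected_fst y₁) (hB₂.ordConnected_fst y₁) h₁ h₂ h₃ h₄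
      (hA.preimage fun x => (x, y₁)) (hB.preimage fun x => (x, y₁))
  · obtain rfl : x₁ = x₂ := oA₁ _ h₁.1 _ h₂.1
    obtain rfl : x₁ = x₃ := oB₁ _ h₁.2 _ h₃.2
    obtain rfl : x₁ = x₄ := oB₂ _ h₂.2 _ h₄.2
    exact interval_C4 (hA₁.ordConnected_snd x₁) (hA₂.ordConnected_snd x₁)
      (hB₁.ordConnected_snd x₁) (hB₂.ordConnected_snd x₁) h₁ h₂ h₃ h₄
      (hA.preimage fun y => (x₁, y)) (hB.preimage fun y => (x₁, y))

/-- Parallel segments `A i`, `B j`, which either all meet or are all disjoint, cannot be connected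
by a system of disjoint curves `T i j` in the manner of `K₃,₃`. -/
theorem no_parallel_grid (A B : Fin 3 → Set Pt) (T : Fin 3 → Fin 3 → Set Pt)
    (hA : ∀ i, StepConn (A i)) (hB : ∀ j, StepConn (B j))
    (hT : ∀ i j, ∀ p ∈ T i j, ∀ q ∈ T i j, RectJoined (T i j) p q)
    (hTA : ∀ i j, (T i j ∩ A i).Nonempty) (hTB : ∀ i j, (T i j ∩ B j).Nonempty)
    (dA : ∀ i k, i ≠ k → Disjoint (A i) (A k)) (dB : ∀ j l, j ≠ l → Disjoint (B j) (B l))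
    (dT : ∀ i j k l, i ≠ k → j ≠ l → Disjoint (T i j) (T k l))
    (dTA : ∀ i j k, i ≠ k → Disjoint (T i j) (A k))
    (dTB : ∀ i j l, j ≠ l → Disjoint (T i j) (B l))
    (ho : (∀ i j, Hor (A i) ∧ Hor (B j)) ∨ (∀ i j, Ver (A i) ∧ Ver (B j)))
    (hAB : (∀ i j, (A i ∩ B j).Nonempty) ∨ (∀ i j, ¬ (A i ∩ B j).Nonempty)) : False := by
  rcases hAB with hAB | hAB
  · refine no_parallel_C4 (hA 0) (hA 1) (hB 0) (hB 1) ?_ (hAB 0 0) (hAB 0 1) (hAB 1 0) (hAB 1 1)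
      (dA 0 1 (by decide)) (dB 0 1 (by decide))
    exact ho.imp (fun h => ⟨(h 0 0).1, (h 1 0).1, (h 0 0).2, (h 0 1).2⟩)
      (fun h => ⟨(h 0 0).1, (h 1 0).1, (h 0 0).2, (h 0 1).2⟩)
  · have dAB : ∀ i j, Disjoint (A i) (B j) := fun i j =>
      disjoint_iff_inter_eq_empty.2 (not_nonempty_iff_eq_empty.1 (hAB i j))
    choose a ha using fun i => (hTA i 0).imp fun _ h => h.2
    choose b hb using fun j => (hTB 0 j).imp fun _ h => h.2
    refine no_planar_K33_joined (fun i j => A i ∪ T i j ∪ B j) a b ?_ ?_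
      (fun i j => Or.inr (hb j)) ?_
    · intro i j
      obtain ⟨c, hcT, hcA⟩ := hTA i j
      obtain ⟨d, hdT, hdB⟩ := hTB i j
      have s1 : RectJoined (A i) (a i) c := Relation.ReflTransGen.single (hA i _ (ha i) _ hcA)
      have s2 : RectJoined (B j) d (b j) := Relation.ReflTransGen.single (hB j _ hdB _ (hb j))
      exact ((s1.mono (fun _ h => Or.inl (Or.inl h))).trans
        ((hT i j c hcT d hdT).mono (fun _ h => Or.inl (Or.inr h)))).trans
        (s2.mono (fun _ h => Or.inr h))
    · intro i j k l hik hjl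
      simp only [disjoint_union_left, disjoint_union_right]
      exact ⟨⟨⟨⟨dA i k hik, dTA i j k hik⟩, (dAB k j).symm⟩,
        ⟨(dTA k l i hik.symm).symm, dT i j k l hik hjl⟩, (dTB k l j hjl.symm).symm⟩,
        ⟨dAB i l, dTB i j l hjl⟩, dB j l hjl⟩
    · rintro i j l hjl ((h | h) | h)
      · exact disjoint_left.1 (dAB i l) h (hb l)
      · exact disjoint_left.1 (dTB i j l hjl) h (hb l)
      · exact disjoint_left.1 (dB j l hjl) h (hb l)

end Plane

/-! ### Curves with few bends on a triangular grid -/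

section Curves

/-- Decomposition of a curve into its straight pieces. -/
theorem IsRectCurveN.exists_pieces {k : ℕ} {γ : ℝ → Pt} (h : IsRectCurveN (k + 1) γ) :
    ∃ pc : Fin (k + 1) → Set Pt, (∀ s, pc s ⊆ Im γ) ∧ (∀ p ∈ Im γ, ∃ s, p ∈ pc s) ∧
      (∀ s, StepConn (pc s)) ∧ (∀ s, Hor (pc s) ∨ Ver (pc s)) ∧
      ∀ p ∈ Im γ, ∀ q ∈ Im γ, RectJoined (Im γ) p q := by
  obtain ⟨-, t, t0, t1, tm, ht⟩ := h
  have sub : ∀ s : Fin (k + 1), γ '' Icc (t s.castSucc) (t s.succ) ⊆ Im γ := by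
    intro s
    refine image_mono (Icc_subset_Icc ?_ ?_)
    · rw [← t0]; exact tm (Fin.zero_le _)
    · rw [← t1]; exact tm (Fin.le_last _)
  have cover : ∀ p ∈ Im γ, ∃ s : Fin (k + 1), p ∈ γ '' Icc (t s.castSucc) (t s.succ) := by
    have aux : ∀ m : Fin (k + 2), ∀ x, 0 ≤ x → x ≤ t m →
        ∃ s : Fin (k + 1), x ∈ Icc (t s.castSucc) (t s.succ) := by
      intro m
      induction m using Fin.induction with
      | zero =>
        intro x h0 h1
        refine ⟨0, ?_, ?_⟩
        · rw [Fin.castSucc_zero, t0]; exact h0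
        · exact h1.trans (tm (Fin.zero_le _))
      | succ m ih =>
        intro x h0 h1
        rcases le_total x (t m.castSucc) with h | h
        · exact ih x h0 h
        · exact ⟨m, h, h1⟩
    rintro _ ⟨x, hx, rfl⟩
    obtain ⟨s, hs⟩ := aux (Fin.last _) x hx.1 (by rw [t1]; exact hx.2)
    exact ⟨s, x, hs, rfl⟩
  have conn : ∀ s : Fin (k + 1), StepConn (γ '' Icc (t s.castSucc) (t s.succ)) := by
    rintro s _ ⟨x, hx, rfl⟩ _ ⟨x', hx', rfl⟩
    obtain ⟨a, d, hd, hγ⟩ := ht s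
    refine ⟨?_, fun z h1 h2 => ?_⟩
    · rw [hγ x hx, hγ x' hx']
      exact hd.imp (fun h => by simp [h]) (fun h => by simp [h])
    · rw [hγ x hx, hγ x' hx', ← segment_eq_uIcc] at h1 h2
      obtain ⟨α, β, hα, hβ, hαβ, e1⟩ := h1
      obtain ⟨α', β', hα', hβ', hαβ', e2⟩ := h2
      have eα : α = 1 - β := by linarith
      have eα' : α' = 1 - β' := by linarith
      subst eα eα'
      simp only [smul_eq_mul] at e1 e2
      rcases hd with hd | hd
      · have hm := convex_Icc (t s.castSucc) (t s.succ) hx hx' hα' hβ' hαβ'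
        refine ⟨_, hm, ?_⟩
        rw [hγ _ hm]
        simp only [smul_eq_mul]
        refine Prod.ext ?_ ?_
        · simp only [hd] at e1 ⊢; linarith
        · simp only; rw [← e2]; ring
      · have hm := convex_Icc (t s.castSucc) (t s.succ) hx hx' hα hβ hαβ
        refine ⟨_, hm, ?_⟩
        rw [hγ _ hm]
        simp only [smul_eq_mul]
        refine Prod.ext ?_ ?_
        · simp only; rw [← e1]; ring
        · simp only [hd] at e2 ⊢; linarith
  refine ⟨fun s => γ '' Icc (t s.castSucc) (t s.succ), sub, cover, conn, ?_, ?_⟩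
  · intro s
    obtain ⟨a, d, hd, hγ⟩ := ht s
    rcases hd with hd | hd
    · right
      rintro _ ⟨x, hx, rfl⟩ _ ⟨x', hx', rfl⟩
      rw [hγ x hx, hγ x' hx']; simp [hd]
    · left
      rintro _ ⟨x, hx, rfl⟩ _ ⟨x', hx', rfl⟩
      rw [hγ x hx, hγ x' hx']; simp [hd]
  · have step : ∀ s : Fin (k + 1), ∀ p ∈ γ '' Icc (t s.castSucc) (t s.succ),
        ∀ q ∈ γ '' Icc (t s.castSucc) (t s.succ), RectJoined (Im γ) p q := fun s p hp q hq =>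
      RectJoined.mono (sub s) (Relation.ReflTransGen.single (conn s p hp q hq))
    have le : ∀ s : Fin (k + 1), t s.castSucc ≤ t s.succ := fun s => tm s.castSucc_lt_succ.le
    have from0 : ∀ m : Fin (k + 2), RectJoined (Im γ) (γ 0) (γ (t m)) := by
      intro m
      induction m using Fin.induction with
      | zero => rw [t0]; exact Relation.ReflTransGen.refl
      | succ m ih =>
        exact ih.trans (step m _ ⟨_, left_mem_Icc.2 (le m), rfl⟩ _
          ⟨_, right_mem_Icc.2 (le m), rfl⟩)
    have all0 : ∀ p ∈ Im γ, RectJoined (Im γ) (γ 0) p := by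
      intro p hp
      obtain ⟨s, hs⟩ := cover p hp
      exact (from0 s.castSucc).trans (step s _ ⟨_, left_mem_Icc.2 (le s), rfl⟩ _ hs)
    exact fun p hp q hq => (all0 p hp).symm.trans (all0 q hq)

/-- A finitary form of Gallai's theorem for the 6 × 6 grid: the points of a combinatorial line over
the alphabet `Fin 6 × Fin 6` are mapped to the plane by adding up their coordinates. -/
theorem exists_mono_grid (κ : Type) [Finite κ] : ∃ N : ℕ, ∀ C : ℕ → ℕ → κ,
    ∃ a b r : ℕ, 0 < r ∧ a + 5 * r < N ∧ b + 5 * r < N ∧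
      ∃ c, ∀ i < 6, ∀ j < 6, C (a + r * i) (b + r * j) = c := by
  classical
  obtain ⟨ι, _, hι⟩ := Combinatorics.Line.exists_mono_in_high_dimension (Fin 6 × Fin 6) κ
  refine ⟨5 * Fintype.card ι + 1, fun C => ?_⟩
  obtain ⟨l, c, hl⟩ := hι fun v => C (∑ i, ((v i).1 : ℕ)) (∑ i, ((v i).2 : ℕ))
  set s : Finset ι := {i | l.idxFun i = none} with hs
  have sum : ∀ (f : Fin 6 × Fin 6 → ℕ) (x : Fin 6 × Fin 6), ∑ i, f (l x i) =
      ∑ i ∈ sᶜ, ((l.idxFun i).map f).getD 0 + s.card * f x := by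
    intro f x
    rw [← Finset.sum_add_sum_compl s, add_comm]
    congr 1
    · refine Finset.sum_congr rfl fun i hi => ?_
      rw [hs, Finset.compl_filter, Finset.mem_filter] at hi
      obtain ⟨y, hy⟩ := Option.ne_none_iff_exists.mp hi.right
      simp [← hy]
    · rw [← smul_eq_mul, ← Finset.sum_const]
      refine Finset.sum_congr rfl fun i hi => ?_
      rw [hs, Finset.mem_filter] at hi
      rw [l.apply_none _ _ hi.right]
  have bound : ∀ f : Fin 6 × Fin 6 → ℕ, (∀ x, f x ≤ 5) → f (5, 5) = 5 →
      ∑ i ∈ sᶜ, ((l.idxFun i).map f).getD 0 + 5 * s.card < 5 * Fintype.card ι + 1 := by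
    intro f hf h5
    have h1 := sum f (5, 5)
    have h2 : ∑ i, f (l (5, 5) i) ≤ ∑ _i : ι, 5 := Finset.sum_le_sum fun i _ => hf _
    rw [Finset.sum_const, smul_eq_mul, Finset.card_univ] at h2
    rw [h5] at h1
    omega
  refine ⟨_, _, s.card, Finset.card_pos.2 ⟨l.proper.choose, ?_⟩,
    bound (fun x => (x.1 : ℕ)) (fun x => by omega) rfl,
    bound (fun x => (x.2 : ℕ)) (fun x => by omega) rfl, c, fun i hi j hj => ?_⟩
  · rw [hs, Finset.mem_filter]
    exact ⟨Finset.mem_univ _, l.proper.choose_spec⟩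
  · have := hl (⟨i, hi⟩, ⟨j, hj⟩)
    rw [← this]
    simp only
    rw [sum (fun x => (x.1 : ℕ)), sum (fun x => (x.2 : ℕ))]

/-- Curves with at most `k` bends cannot realize the intersection pattern of a large triangular
grid. Whether the long curves of different families meet plays no role. -/
theorem no_triangular_grid (k : ℕ) : ∃ N : ℕ, ∀ (h v d : ℕ → ℝ → Pt) (t : ℕ → ℕ → ℝ → Pt),
    (∀ i, IsKBendCurve k (h i)) → (∀ i, IsKBendCurve k (v i)) → (∀ i, IsKBendCurve k (d i)) →
    (∀ i j, IsKBendCurve k (t i j)) →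
    (∀ i < N, ∀ i' < N, i ≠ i' → Disjoint (Im (h i)) (Im (h i'))) →
    (∀ i < N, ∀ i' < N, i ≠ i' → Disjoint (Im (v i)) (Im (v i'))) →
    (∀ i < 2 * N, ∀ i' < 2 * N, i ≠ i' → Disjoint (Im (d i)) (Im (d i'))) →
    (∀ i < N, ∀ j < N, ∀ i' < N, ∀ j' < N, i ≠ i' ∨ j ≠ j' →
      Disjoint (Im (t i j)) (Im (t i' j'))) →
    (∀ i < N, ∀ j < N, ∀ i' < N, (Im (t i j) ∩ Im (h i')).Nonempty ↔ i' = i) →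
    (∀ i < N, ∀ j < N, ∀ j' < N, (Im (t i j) ∩ Im (v j')).Nonempty ↔ j' = j) →
    (∀ i < N, ∀ j < N, ∀ m < 2 * N, (Im (t i j) ∩ Im (d m)).Nonempty ↔ m = i + j) → False := by
  classical
  obtain ⟨N, hN⟩ := exists_mono_grid
    ((Fin (k + 1) × Fin (k + 1) × Fin (k + 1)) × (Prop × Prop × Prop) × (Prop × Prop × Prop))
  refine ⟨N, fun h v d t ch cv cd ct dh dv dd dt th tv td => ?_⟩
  choose ph ph1 ph2 ph3 ph4 _ using fun i => (ch i).exists_pieces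
  choose pv pv1 pv2 pv3 pv4 _ using fun i => (cv i).exists_pieces
  choose pd pd1 pd2 pd3 pd4 _ using fun i => (cd i).exists_pieces
  choose _ _ _ _ _ tj using fun i j => (ct i j).exists_pieces
  have pick : ∀ i j, ∃ q : Fin (k + 1) × Fin (k + 1) × Fin (k + 1), i < N → j < N →
      (Im (t i j) ∩ ph i q.1).Nonempty ∧ (Im (t i j) ∩ pv j q.2.1).Nonempty ∧
      (Im (t i j) ∩ pd (i + j) q.2.2).Nonempty := by
    intro i j
    by_cases hij : i < N ∧ j < N
    · obtain ⟨hi, hj⟩ := hij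
      obtain ⟨x, hx, hx'⟩ := (th i hi j hj i hi).2 rfl
      obtain ⟨y, hy, hy'⟩ := (tv i hi j hj j hj).2 rfl
      obtain ⟨z, hz, hz'⟩ := (td i hi j hj (i + j) (by omega)).2 rfl
      obtain ⟨s₁, hs₁⟩ := ph2 i x hx'
      obtain ⟨s₂, hs₂⟩ := pv2 j y hy'
      obtain ⟨s₃, hs₃⟩ := pd2 (i + j) z hz'
      exact ⟨(s₁, s₂, s₃), fun _ _ => ⟨⟨x, hx, hs₁⟩, ⟨y, hy, hs₂⟩, ⟨z, hz, hs₃⟩⟩⟩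
    · exact ⟨(0, 0, 0), fun hi hj => absurd ⟨hi, hj⟩ hij⟩
  choose q hq using pick
  obtain ⟨a, b, r, hr, haN, hbN, ⟨⟨s₁, s₂, s₃⟩, ⟨o₁, o₂, o₃⟩, ⟨m₁, m₂, m₃⟩⟩, hc⟩ :=
    hN fun i j => (q i j,
      (Hor (ph i (q i j).1), Hor (pv j (q i j).2.1), Hor (pd (i + j) (q i j).2.2)),
      ((ph i (q i j).1 ∩ pv j (q i j).2.1).Nonempty,
        (ph i (q i j).1 ∩ pd (i + j) (q i j).2.2).Nonempty,
        (pv j (q i j).2.1 ∩ pd (i + j) (q i j).2.2).Nonempty))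
  have hI : ∀ i < 6, a + r * i < N := fun i hi => by nlinarith
  have hJ : ∀ j < 6, b + r * j < N := fun j hj => by nlinarith
  have inj : ∀ {x i i' : ℕ}, i ≠ i' → x + r * i ≠ x + r * i' := by
    intro x i i' hii heq
    exact hii (Nat.eq_of_mul_eq_mul_left hr (Nat.add_left_cancel heq))
  have sumeq : ∀ i j m, i + j = m → a + r * i + (b + r * j) = a + b + r * m := by
    rintro i j _ rfl; ring
  have hq' : ∀ i < 6, ∀ j < 6, q (a + r * i) (b + r * j) = (s₁, s₂, s₃) := fun i hi j hj =>
    congrArg Prod.fst (hc i hi j hj)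
  have facts : ∀ i < 6, ∀ j < 6, ∀ m, i + j = m →
      ((Im (t (a + r * i) (b + r * j)) ∩ ph (a + r * i) s₁).Nonempty ∧
        (Im (t (a + r * i) (b + r * j)) ∩ pv (b + r * j) s₂).Nonempty ∧
        (Im (t (a + r * i) (b + r * j)) ∩ pd (a + b + r * m) s₃).Nonempty) ∧
      (Hor (ph (a + r * i) s₁) ↔ o₁) ∧ (Hor (pv (b + r * j) s₂) ↔ o₂) ∧
      (Hor (pd (a + b + r * m) s₃) ↔ o₃) ∧
      ((ph (a + r * i) s₁ ∩ pv (b + r * j) s₂).Nonempty ↔ m₁) ∧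
      ((ph (a + r * i) s₁ ∩ pd (a + b + r * m) s₃).Nonempty ↔ m₂) ∧
      ((pv (b + r * j) s₂ ∩ pd (a + b + r * m) s₃).Nonempty ↔ m₃) := by
    intro i hi j hj m hm
    have h1 := hq _ _ (hI i hi) (hJ j hj)
    have h2 := hc i hi j hj
    rw [hq' i hi j hj, sumeq i j m hm] at h1
    simp only [hq' i hi j hj, sumeq i j m hm, Prod.mk.injEq, true_and, eq_iff_iff] at h2
    exact ⟨h1, h2.1.1, h2.1.2.1, h2.1.2.2, h2.2.1, h2.2.2.1, h2.2.2.2⟩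
  have disj : ∀ {A B : Set Pt}, ¬ (A ∩ B).Nonempty → Disjoint A B := fun h =>
    disjoint_iff_inter_eq_empty.2 (not_nonempty_iff_eq_empty.1 h)
  have hM : ∀ m < 6, a + b + r * m < 2 * N := fun m hm => by nlinarith
  have dich : ∀ {P : Fin 3 → Fin 3 → Prop} {m : Prop}, (∀ i j, P i j ↔ m) →
      (∀ i j, P i j) ∨ (∀ i j, ¬ P i j) := by
    intro P m hP
    by_cases hm : m
    · exact Or.inl fun i j => (hP i j).2 hm
    · exact Or.inr fun i j hp => hm ((hP i j).1 hp)
  have orient : ∀ {A B : Fin 3 → Set Pt} {o o' : Prop}, (∀ i, Hor (A i) ∨ Ver (A i)) →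
      (∀ i, Hor (B i) ∨ Ver (B i)) → (∀ i, Hor (A i) ↔ o) → (∀ i, Hor (B i) ↔ o') → (o ↔ o') →
      ((∀ i j, Hor (A i) ∧ Hor (B j)) ∨ (∀ i j, Ver (A i) ∧ Ver (B j))) := by
    intro A B o o' hA hB hAo hBo hoo
    by_cases ho : o
    · exact Or.inl fun i j => ⟨(hAo i).2 ho, (hBo j).2 (hoo.1 ho)⟩
    · exact Or.inr fun i j => ⟨(hA i).resolve_left fun h => ho ((hAo i).1 h),
        (hB j).resolve_left fun h => ho (hoo.2 ((hBo j).1 h))⟩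
  have ne : ∀ {i j : Fin 3}, i ≠ j → (i : ℕ) ≠ j := fun h h' => h (Fin.ext h')
  -- The three orientations take only two values, so it suffices to refute each coincidence.
  have caseHV : ¬ (o₁ ↔ o₂) := by
    intro ho
    refine no_parallel_grid (fun i => ph (a + r * i) s₁) (fun j => pv (b + r * j) s₂)
      (fun i j => Im (t (a + r * i) (b + r * j))) (fun i => ph3 _ _) (fun i => pv3 _ _)
      (fun i j => tj _ _) (fun i j => (facts i (by omega) j (by omega) _ rfl).1.1)
      (fun i j => (facts i (by omega) j (by omega) _ rfl).1.2.1) ?_ ?_ ?_ ?_ ?_ ?_ ?_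
    · exact fun i k hik => (dh _ (hI i (by omega)) _ (hI k (by omega)) (inj (ne hik))).mono
        (ph1 _ _) (ph1 _ _)
    · exact fun i k hik => (dv _ (hJ i (by omega)) _ (hJ k (by omega)) (inj (ne hik))).mono
        (pv1 _ _) (pv1 _ _)
    · exact fun i j k l hik _ => dt _ (hI i (by omega)) _ (hJ j (by omega)) _ (hI k (by omega)) _
        (hJ l (by omega)) (Or.inl (inj (ne hik)))
    · intro i j k hik
      refine (disj fun hne => ?_).mono_right (ph1 _ _)
      exact inj (ne hik) ((th _ (hI i (by omega)) _ (hJ j (by omega)) _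
        (hI k (by omega))).1 hne).symm
    · intro i j l hjl
      refine (disj fun hne => ?_).mono_right (pv1 _ _)
      exact inj (ne hjl) ((tv _ (hI i (by omega)) _ (hJ j (by omega)) _
        (hJ l (by omega))).1 hne).symm
    · exact orient (fun _ => ph4 _ _) (fun _ => pv4 _ _)
        (fun i => (facts i (by omega) 0 (by omega) _ rfl).2.1)
        (fun j => (facts 0 (by omega) j (by omega) _ rfl).2.2.1) ho
    · exact dich fun i j => (facts i (by omega) j (by omega) _ rfl).2.2.2.2.1
  -- The diagonals are numbered from `3` on, so that `m + 3 - i` is a row or column of the grid for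
  -- all `i, m < 3`.
  have caseHD : ¬ (o₁ ↔ o₃) := by
    intro ho
    refine no_parallel_grid (fun i => ph (a + r * i) s₁) (fun m => pd (a + b + r * (m + 3)) s₃)
      (fun i m => Im (t (a + r * i) (b + r * (m + 3 - i)))) (fun i => ph3 _ _) (fun i => pd3 _ _)
      (fun i j => tj _ _) (fun i m => (facts i (by omega) (m + 3 - i) (by omega) _ rfl).1.1)
      (fun i m => (facts i (by omega) (m + 3 - i) (by omega) (m + 3) (by omega)).1.2.2)
      ?_ ?_ ?_ ?_ ?_ ?_ ?_
    · exact fun i k hik => (dh _ (hI i (by omega)) _ (hI k (by omega)) (inj (ne hik))).mono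
        (ph1 _ _) (ph1 _ _)
    · exact fun i k hik => (dd _ (hM _ (by omega)) _ (hM _ (by omega))
        (inj (by have := ne hik; omega))).mono (pd1 _ _) (pd1 _ _)
    · exact fun i j k l hik _ => dt _ (hI i (by omega)) _ (hJ _ (by omega)) _ (hI k (by omega)) _
        (hJ _ (by omega)) (Or.inl (inj (ne hik)))
    · intro i j k hik
      refine (disj fun hne => ?_).mono_right (ph1 _ _)
      exact inj (ne hik) ((th _ (hI i (by omega)) _ (hJ _ (by omega)) _
        (hI k (by omega))).1 hne).symm
    · intro i j l hjl
      refine (disj fun hne => ?_).mono_right (pd1 _ _)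
      have := (td _ (hI i (by omega)) _ (hJ _ (by omega)) _ (hM _ (by omega))).1 hne
      rw [sumeq _ _ (j + 3) (by omega)] at this
      exact inj (by have := ne hjl; omega) this.symm
    · exact orient (fun _ => ph4 _ _) (fun _ => pd4 _ _)
        (fun i => (facts i (by omega) 0 (by omega) _ rfl).2.1)
        (fun m => (facts 0 (by omega) (m + 3) (by omega) (m + 3) (by omega)).2.2.2.1) ho
    · exact dich fun i m =>
        (facts i (by omega) (m + 3 - i) (by omega) (m + 3) (by omega)).2.2.2.2.2.1
  have caseVD : ¬ (o₂ ↔ o₃) := by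
    intro ho
    refine no_parallel_grid (fun j => pv (b + r * j) s₂) (fun m => pd (a + b + r * (m + 3)) s₃)
      (fun j m => Im (t (a + r * (m + 3 - j)) (b + r * j))) (fun i => pv3 _ _) (fun i => pd3 _ _)
      (fun i j => tj _ _) (fun j m => (facts (m + 3 - j) (by omega) j (by omega) _ rfl).1.2.1)
      (fun j m => (facts (m + 3 - j) (by omega) j (by omega) (m + 3) (by omega)).1.2.2)
      ?_ ?_ ?_ ?_ ?_ ?_ ?_
    · exact fun i k hik => (dv _ (hJ i (by omega)) _ (hJ k (by omega)) (inj (ne hik))).mono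
        (pv1 _ _) (pv1 _ _)
    · exact fun i k hik => (dd _ (hM _ (by omega)) _ (hM _ (by omega))
        (inj (by have := ne hik; omega))).mono (pd1 _ _) (pd1 _ _)
    · exact fun i j k l hik _ => dt _ (hI _ (by omega)) _ (hJ _ (by omega)) _ (hI _ (by omega)) _
        (hJ _ (by omega)) (Or.inr (inj (ne hik)))
    · intro i j k hik
      refine (disj fun hne => ?_).mono_right (pv1 _ _)
      exact inj (ne hik) ((tv _ (hI _ (by omega)) _ (hJ _ (by omega)) _
        (hJ k (by omega))).1 hne).symm
    · intro i j l hjl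
      refine (disj fun hne => ?_).mono_right (pd1 _ _)
      have := (td _ (hI _ (by omega)) _ (hJ _ (by omega)) _ (hM _ (by omega))).1 hne
      rw [sumeq _ _ (j + 3) (by omega)] at this
      exact inj (by have := ne hjl; omega) this.symm
    · exact orient (fun _ => pv4 _ _) (fun _ => pd4 _ _)
        (fun j => (facts 0 (by omega) j (by omega) _ rfl).2.2.1)
        (fun m => (facts 0 (by omega) (m + 3) (by omega) (m + 3) (by omega)).2.2.2.1) ho
    · exact dich fun j m =>
        (facts (m + 3 - j) (by omega) j (by omega) (m + 3) (by omega)).2.2.2.2.2.2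
  tauto

end Curves

/-! ### The triangular grid of segments -/

section Segments

/-- The ends of the segments of the grid: `c = 0, 1, 2` are the horizontal, vertical and diagonal
lines with number `i` (repeated for every `j`), and `c = 3` is the short segment at the grid point in
row `i` and column `j`, that is, at `(j, i)`. -/
noncomputable def gridSeg (M : ℕ) (c : Fin 4) (i j : ℕ) : Pt × Pt :=
  match c with
  | 0 => ((-1, i), (M, i))
  | 1 => ((i, -1), (i, M))
  | 2 => ((-1, i + 1), (i + 1, -1))
  | 3 => ((j, i), (j + 1 / 4, i))

/-- The segment with ends `gridSeg M c i j`. -/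
def gridSet (M : ℕ) (c : Fin 4) (i j : ℕ) : Set Pt :=
  segment ℝ (gridSeg M c i j).1 (gridSeg M c i j).2

theorem gridSeg_ne (M : ℕ) (c : Fin 4) (i j : ℕ) : (gridSeg M c i j).1 ≠ (gridSeg M c i j).2 := by
  intro h
  fin_cases c <;> simp [gridSeg, Prod.ext_iff] at h
  · have : (0 : ℝ) ≤ M := Nat.cast_nonneg _
    linarith
  · have : (0 : ℝ) ≤ M := Nat.cast_nonneg _
    linarith
  · have : (0 : ℝ) ≤ i := Nat.cast_nonneg _
    linarith [h.1]

theorem gridSeg_dir (M : ℕ) (c : Fin 4) (i j : ℕ) : ∃ (e : Fin 3) (x : ℝ),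
    (gridSeg M c i j).2 - (gridSeg M c i j).1 =
      x • (![(1, 0), (0, 1), (1, -1)] : Fin 3 → Pt) e := by
  fin_cases c
  · exact ⟨0, M + 1, by simp [gridSeg]⟩
  · exact ⟨1, M + 1, by simp [gridSeg]⟩
  · exact ⟨2, i + 2, by simp [gridSeg]; constructor <;> ring⟩
  · exact ⟨0, 1 / 4, by simp [gridSeg]⟩

theorem gridSet_0 {M i j : ℕ} {p : Pt} (h : p ∈ gridSet M 0 i j) : p.2 = i := by
  obtain ⟨α, β, -, -, hαβ, rfl⟩ := h
  simp [gridSeg, ← add_mul, hαβ]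

theorem gridSet_1 {M i j : ℕ} {p : Pt} (h : p ∈ gridSet M 1 i j) : p.1 = i := by
  obtain ⟨α, β, -, -, hαβ, rfl⟩ := h
  simp [gridSeg, ← add_mul, hαβ]

theorem gridSet_2 {M i j : ℕ} {p : Pt} (h : p ∈ gridSet M 2 i j) : p.1 + p.2 = i := by
  obtain ⟨α, β, -, -, hαβ, rfl⟩ := h
  simp [gridSeg]
  linear_combination (i : ℝ) * hαβ

theorem gridSet_3 {M i j : ℕ} {p : Pt} (h : p ∈ gridSet M 3 i j) :
    p.2 = i ∧ (j : ℝ) ≤ p.1 ∧ p.1 ≤ j + 1 / 4 := by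
  obtain ⟨α, β, hα, hβ, hαβ, rfl⟩ := h
  have : α = 1 - β := by linarith
  subst this
  simp [gridSeg]
  refine ⟨by ring, by linarith, by linarith⟩

theorem mem_gridSet_0 {M i j : ℕ} (l : ℕ) (hj : j < M) : ((j, i) : Pt) ∈ gridSet M 0 i l := by
  have h0 : (0 : ℝ) < M + 1 := by positivity
  have hj' : (j : ℝ) < M := by exact_mod_cast hj
  refine ⟨(M - j) / (M + 1), (j + 1) / (M + 1), div_nonneg (by linarith) h0.le, by positivity,
    by field_simp; ring, ?_⟩
  refine Prod.ext ?_ ?_ <;> simp [gridSeg] <;> field_simp <;> ring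

theorem mem_gridSet_1 {M i j : ℕ} (l : ℕ) (hi : i < M) : ((j, i) : Pt) ∈ gridSet M 1 j l := by
  have h0 : (0 : ℝ) < M + 1 := by positivity
  have hi' : (i : ℝ) < M := by exact_mod_cast hi
  refine ⟨(M - i) / (M + 1), (i + 1) / (M + 1), div_nonneg (by linarith) h0.le, by positivity,
    by field_simp; ring, ?_⟩
  refine Prod.ext ?_ ?_ <;> simp [gridSeg] <;> field_simp <;> ring

theorem mem_gridSet_2 {M i j : ℕ} (l : ℕ) : ((j, i) : Pt) ∈ gridSet M 2 (i + j) l := by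
  have h0 : (0 : ℝ) < i + j + 2 := by positivity
  refine ⟨(i + 1) / (i + j + 2), (j + 1) / (i + j + 2), by positivity, by positivity,
    by field_simp; ring, ?_⟩
  refine Prod.ext ?_ ?_ <;> simp [gridSeg] <;> field_simp <;> ring

theorem mem_gridSet_3 {M i j : ℕ} : ((j, i) : Pt) ∈ gridSet M 3 i j := left_mem_segment _ _ _

theorem nat_eq_of_close {a b : ℕ} {x : ℝ} (h1 : (a : ℝ) ≤ x) (h2 : x ≤ a + 1 / 4)
    (h3 : (b : ℝ) ≤ x) (h4 : x ≤ b + 1 / 4) : a = b := by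
  have e1 : (a : ℝ) < b + 1 := by linarith
  have e2 : (b : ℝ) < a + 1 := by linarith
  have e1' : a < b + 1 := by exact_mod_cast e1
  have e2' : b < a + 1 := by exact_mod_cast e2
  omega

theorem exists_3DIR_not_VPG (k : ℕ) :
    ∃ (n : ℕ) (G : SimpleGraph (Fin n)), In3DIR G ∧ ¬ InBkVPG k G := by
  obtain ⟨N, hN⟩ := no_triangular_grid k
  have hM : 0 < 2 * N + 1 := by omega
  set M := 2 * N + 1 with hMdef
  let V := Fin 4 × Fin M × Fin M
  let e : V ≃ Fin (Fintype.card V) := Fintype.equivFin V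
  let S : V → Pt × Pt := fun v => gridSeg M v.1 v.2.1 v.2.2
  let G : SimpleGraph (Fin (Fintype.card V)) :=
    { Adj := fun x y => x ≠ y ∧ (segment ℝ (S (e.symm x)).1 (S (e.symm x)).2 ∩
        segment ℝ (S (e.symm y)).1 (S (e.symm y)).2).Nonempty
      symm := ⟨fun x y h => ⟨h.1.symm, by rw [inter_comm]; exact h.2⟩⟩
      loopless := ⟨fun x h => h.1 rfl⟩ }
  refine ⟨Fintype.card V, G, ⟨![(1, 0), (0, 1), (1, -1)], fun x => S (e.symm x), ?_, ?_, ?_⟩, ?_⟩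
  · exact fun x => gridSeg_ne _ _ _ _
  · exact fun x => gridSeg_dir _ _ _ _
  · exact fun x y hxy => ⟨fun h => ⟨hxy, h⟩, fun h => h.2⟩
  rintro ⟨R, hR, hrep⟩
  -- Of the repeated lines only those with second index `0` are used. Reduction modulo `M` extends
  -- the curves to all natural indices.
  let f : ℕ → Fin M := fun i => ⟨i % M, Nat.mod_lt _ hM⟩
  have fval : ∀ i < M, ((f i : Fin M) : ℕ) = i := fun i hi => Nat.mod_eq_of_lt hi
  let Q : Fin 4 → ℕ → ℕ → ℝ → Pt := fun c i j => R (e (c, f i, f j))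
  have hQ : ∀ c c' i j i' j', i < M → j < M → i' < M → j' < M → (c ≠ c' ∨ i ≠ i' ∨ j ≠ j') →
      ((Im (Q c i j) ∩ Im (Q c' i' j')).Nonempty ↔
        (gridSet M c i j ∩ gridSet M c' i' j').Nonempty) := by
    intro c c' i j i' j' hi hj hi' hj' hne
    have hne' : e (c, f i, f j) ≠ e (c', f i', f j') := by
      intro h
      have h := e.injective h
      have h := And.intro (congrArg (fun x => x.1) h) (And.intro (congrArg (fun x => x.2.1) h)
        (congrArg (fun x => x.2.2) h))
      have h1 := congrArg Fin.val h.2.1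
      have h2 := congrArg Fin.val h.2.2
      rw [fval i hi, fval i' hi'] at h1
      rw [fval j hj, fval j' hj'] at h2
      tauto
    have := hrep _ _ hne'
    rw [this]
    simp only [G, S, Equiv.symm_apply_apply, fval i hi, fval j hj, fval i' hi', fval j' hj']
    exact ⟨fun h => h.2, fun h => ⟨hne', h⟩⟩
  have disj : ∀ {A B : Set Pt}, ¬ (A ∩ B).Nonempty → Disjoint A B := fun h =>
    disjoint_iff_inter_eq_empty.2 (not_nonempty_iff_eq_empty.1 h)
  refine hN (fun i => Q 0 i 0) (fun i => Q 1 i 0) (fun i => Q 2 i 0) (fun i j => Q 3 i j)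
    (fun _ => hR _) (fun _ => hR _) (fun _ => hR _) (fun _ _ => hR _) ?_ ?_ ?_ ?_ ?_ ?_ ?_
  · intro i hi i' hi' hne
    refine disj fun h => ?_
    obtain ⟨p, h1, h2⟩ := (hQ 0 0 i 0 i' 0 (by omega) hM (by omega) hM (by tauto)).1 h
    exact hne (by exact_mod_cast (gridSet_0 h1).symm.trans (gridSet_0 h2))
  · intro i hi i' hi' hne
    refine disj fun h => ?_
    obtain ⟨p, h1, h2⟩ := (hQ 1 1 i 0 i' 0 (by omega) hM (by omega) hM (by tauto)).1 h
    exact hne (by exact_mod_cast (gridSet_1 h1).symm.trans (gridSet_1 h2))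
  · intro i hi i' hi' hne
    refine disj fun h => ?_
    obtain ⟨p, h1, h2⟩ := (hQ 2 2 i 0 i' 0 (by omega) hM (by omega) hM (by tauto)).1 h
    exact hne (by exact_mod_cast (gridSet_2 h1).symm.trans (gridSet_2 h2))
  · intro i hi j hj i' hi' j' hj' hne
    refine disj fun h => ?_
    obtain ⟨p, h1, h2⟩ := (hQ 3 3 i j i' j' (by omega) (by omega) (by omega) (by omega)
      (by tauto)).1 h
    obtain ⟨a1, a2, a3⟩ := gridSet_3 h1
    obtain ⟨b1, b2, b3⟩ := gridSet_3 h2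
    rcases hne with hne | hne
    · exact hne (by exact_mod_cast a1.symm.trans b1)
    · exact hne (nat_eq_of_close a2 a3 b2 b3)
  · intro i hi j hj i' hi'
    rw [hQ 3 0 i j i' 0 (by omega) (by omega) (by omega) hM (Or.inl (by decide))]
    constructor
    · rintro ⟨p, h1, h2⟩
      exact_mod_cast (gridSet_0 h2).symm.trans (gridSet_3 h1).1
    · rintro rfl
      exact ⟨_, mem_gridSet_3, mem_gridSet_0 0 (by omega)⟩
  · intro i hi j hj j' hj'
    rw [hQ 3 1 i j j' 0 (by omega) (by omega) (by omega) hM (Or.inl (by decide))]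
    constructor
    · rintro ⟨p, h1, h2⟩
      obtain ⟨-, a2, a3⟩ := gridSet_3 h1
      have := gridSet_1 h2
      exact (nat_eq_of_close a2 a3 this.ge (by linarith)).symm
    · rintro rfl
      exact ⟨_, mem_gridSet_3, mem_gridSet_1 0 (by omega)⟩
  · intro i hi j hj m hm
    rw [hQ 3 2 i j m 0 (by omega) (by omega) (by omega) hM (Or.inl (by decide))]
    constructor
    · rintro ⟨p, h1, h2⟩
      obtain ⟨a1, a2, a3⟩ := gridSet_3 h1
      have := gridSet_2 h2
      refine nat_eq_of_close this.ge (by linarith) ?_ ?_ <;> push_cast <;> linarith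
    · rintro rfl
      exact ⟨_, mem_gridSet_3, mem_gridSet_2 0⟩

end Segments

theorem In3DIR.inSEG {V : Type*} {G : SimpleGraph V} (h : In3DIR G) : InSEG G := by
  obtain ⟨_, S, h1, _, h3⟩ := h
  exact ⟨S, h1, h3⟩

/-- For every `k ≥ 0` there is a 3-DIR graph with no `B_k`-VPG
representation; consequently there is no `k` with SEG ⊆ `B_k`-VPG. -/
theorem exists_3DIR_graph_not_in_Bk_VPG :
    (∀ k : ℕ, ∃ (n : ℕ) (G : SimpleGraph (Fin n)), In3DIR G ∧ ¬ InBkVPG k G) ∧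
    ¬ ∃ k : ℕ, ∀ (n : ℕ) (G : SimpleGraph (Fin n)), InSEG G → InBkVPG k G := by
  refine ⟨exists_3DIR_not_VPG, ?_⟩
  rintro ⟨k, hk⟩
  obtain ⟨n, G, hG, hn⟩ := exists_3DIR_not_VPG k
  exact hn (hk n G hG.inSEG)
end

section
/- A bipartite simple graph has a B_0-VPG representation (a representation by horizontal and vertical straight segments in the plane, where segments of the same direction may overlap) if and only if it has a grid intersection representation, i.e., a representation by horizontal and vertical straight segments in which no two segments of the same direction share a common point. -/
/-!
The forward implication holds for any two families of axis-parallel boxes, not only segments.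
Regard every segment as a (degenerate) box. Boxes of the same colour class are pairwise disjoint.

* A finite family of pairwise disjoint boxes can be ordered from south-west to north-east: `u` comes
  before `v` whenever the lower left corner of `u` is dominated by the upper right corner of `v`
  (`exists_southwest_order`). Reflecting the plane, it can also be ordered from south-east to
  north-west.
* Order one class `A` from south-west to north-east by `f`, and the other class `B` from south-east
  to north-west by `g`. If `a ∈ A` and `b ∈ B` are disjoint, `b` cannot lie (in the order `g`)
  between two neighbours of `a` while `a` lies (in the order `f`) between two neighbours of `b`
  (`meet_of_between`).
  For instance, if `a` is to the left of `b`, then a neighbour of `b` preceding `a` must be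
  below `a`, and a neighbour of `a` preceding `b` must be below `b`; so `b` has a point below all
  of `a` and `a` has a point below all of `b`, which is absurd.
* Hence `a ↦` the horizontal segment at height `f a` spanning the `g`-values of its neighbours, and
  `b ↦` the vertical segment at abscissa `g b` spanning the `f`-values of its neighbours, is a grid
  intersection representation. The segments are lengthened slightly to be nondegenerate
  (`exists_hull`).
-/

open Set Metric

/-- The segment with endpoints `e.1, e.2` is horizontal or vertical. -/
def AxisParallelSeg (e : Pt × Pt) : Prop := e.1.1 = e.2.1 ∨ e.1.2 = e.2.2

/-- `S` is an intersection representation of `G` by straight line segments. -/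
def SegRep {V : Type*} (G : SimpleGraph V) (S : V → Pt × Pt) : Prop :=
  ∀ u v : V, u ≠ v →
    ((segment ℝ (S u).1 (S u).2 ∩ segment ℝ (S v).1 (S v).2).Nonempty ↔ G.Adj u v)

/-- The boxes `[x₀ u, x₁ u] × [y₀ u, y₁ u]` and `[x₀ v, x₁ v] × [y₀ v, y₁ v]` have a common point
(for boxes that are nonempty). -/
def BoxesMeet {V : Type} (x₀ x₁ y₀ y₁ : V → ℝ) (u v : V) : Prop :=
  x₀ u ≤ x₁ v ∧ x₀ v ≤ x₁ u ∧ y₀ u ≤ y₁ v ∧ y₀ v ≤ y₁ u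

/-- Pairwise disjoint boxes can be linearly ordered from south-west to north-east. The boxes are
inserted by increasing left end `x₀`. If `a` has the largest left end, every successor `c` of `a` is
above `a` and spans the abscissa `x₀ a`; therefore every predecessor of `a` also has to
precede `c`, and there is room for `a` in the order already built. -/
lemma exists_southwest_order {V : Type} (x₀ x₁ y₀ y₁ : V → ℝ)
    (hx : ∀ v, x₀ v ≤ x₁ v) (hy : ∀ v, y₀ v ≤ y₁ v) (s : Finset V)
    (hs : ∀ u ∈ s, ∀ v ∈ s, u ≠ v → ¬ BoxesMeet x₀ x₁ y₀ y₁ u v) :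
    ∃ f : V → ℝ, (∀ u ∈ s, ∀ v ∈ s, f u = f v → u = v) ∧
      ∀ u ∈ s, ∀ v ∈ s, u ≠ v → x₀ u ≤ x₁ v → y₀ u ≤ y₁ v → f u < f v := by
  classical
  induction s using Finset.induction_on_max_value x₀ with
  | empty => exact ⟨0, by simp, by simp⟩
  | insert a s has hmax ih =>
    obtain ⟨f, finj, hf⟩ := ih fun u hu v hv =>
      hs u (Finset.mem_insert_of_mem hu) v (Finset.mem_insert_of_mem hv)
    have hsa : ∀ u ∈ s, ¬ BoxesMeet x₀ x₁ y₀ y₁ u a := fun u hu =>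
      hs u (Finset.mem_insert_of_mem hu) a (Finset.mem_insert_self _ _)
        (fun h => has (h ▸ hu))
    -- the old elements that go below `a`: those at most some predecessor of `a`
    let lo : Finset V := s.filter fun w => ∃ p ∈ s, y₀ p ≤ y₁ a ∧ f w ≤ f p
    obtain ⟨m, hlo, hhi⟩ := Order.exists_between_finsets (lo.image f) ((s \ lo).image f) (by
      simp only [Finset.forall_mem_image]
      intro w hw z hz
      simp only [lo, Finset.mem_sdiff, Finset.mem_filter, not_and, not_exists, not_le] at hw hz
      obtain ⟨-, p, hp, hpa, hwp⟩ := hw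
      exact hwp.trans_lt (hz.2 hz.1 p hp hpa))
    simp only [Finset.forall_mem_image] at hlo hhi
    have hne : ∀ u ∈ s, u ≠ a := fun u hu h => has (h ▸ hu)
    have hfm : ∀ u ∈ s, f u ≠ m := by
      intro u hu h
      by_cases hul : u ∈ lo
      · exact (hlo hul).ne h
      · exact (hhi (Finset.mem_sdiff.2 ⟨hu, hul⟩)).ne' h
    have hpred : ∀ u ∈ s, y₀ u ≤ y₁ a → f u < m := fun u hu h =>
      hlo (Finset.mem_filter.2 ⟨hu, u, hu, h, le_rfl⟩)
    have hsucc : ∀ u ∈ s, x₀ a ≤ x₁ u → y₀ a ≤ y₁ u → m < f u := by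
      intro u hu h1 h2
      refine hhi (Finset.mem_sdiff.2 ⟨hu, fun hul => ?_⟩)
      obtain ⟨-, p, hp, hpa, hup⟩ := Finset.mem_filter.1 hul
      have habove : y₁ a < y₀ u := by
        by_contra! h
        exact hsa u hu ⟨(hmax u hu).trans (hx a), h1, h, h2⟩
      have hpu : p ≠ u := by
        rintro rfl
        exact absurd hpa (not_le.2 habove)
      have := hf p hp u hu hpu ((hmax p hp).trans h1) (by linarith [hy u])
      linarith
    refine ⟨Function.update f a m, ?_, ?_⟩
    · intro u hu v hv h
      rcases Finset.mem_insert.1 hu with rfl | hus <;> rcases Finset.mem_insert.1 hv with rfl | hvs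
      · rfl
      · rw [Function.update_self, Function.update_of_ne (hne v hvs)] at h
        exact absurd h.symm (hfm v hvs)
      · rw [Function.update_self, Function.update_of_ne (hne u hus)] at h
        exact absurd h (hfm u hus)
      · rw [Function.update_of_ne (hne u hus), Function.update_of_ne (hne v hvs)] at h
        exact finj u hus v hvs h
    · intro u hu v hv huv h1 h2
      rcases Finset.mem_insert.1 hu with rfl | hus <;> rcases Finset.mem_insert.1 hv with rfl | hvs
      · exact absurd rfl huv
      · rw [Function.update_self, Function.update_of_ne (hne v hvs)]
        exact hsucc v hvs h1 h2
      · rw [Function.update_self, Function.update_of_ne (hne u hus)]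
        exact hpred u hus h2
      · rw [Function.update_of_ne (hne u hus), Function.update_of_ne (hne v hvs)]
        exact hf u hus v hvs huv h1 h2

/-- The order-theoretic core. The hypotheses `h₁`, `h₂` say that the south-west to
north-east relation forces neither `a` before `a₁` nor `a₂` before `a`; `k₁`, `k₂` say the same
of `b₁`, `b`, `b₂` and the south-east to north-west relation. -/
lemma meet_of_between {V : Type} {x₀ x₁ y₀ y₁ : V → ℝ} {a a₁ a₂ b b₁ b₂ : V}
    (hx : ∀ v, x₀ v ≤ x₁ v) (hy : ∀ v, y₀ v ≤ y₁ v)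
    (h₁ : ¬ (x₀ a ≤ x₁ a₁ ∧ y₀ a ≤ y₁ a₁)) (h₂ : ¬ (x₀ a₂ ≤ x₁ a ∧ y₀ a₂ ≤ y₁ a))
    (k₁ : ¬ (x₀ b₁ ≤ x₁ b ∧ y₀ b ≤ y₁ b₁)) (k₂ : ¬ (x₀ b ≤ x₁ b₂ ∧ y₀ b₂ ≤ y₁ b))
    (m₁ : BoxesMeet x₀ x₁ y₀ y₁ b a₁) (m₂ : BoxesMeet x₀ x₁ y₀ y₁ b a₂)
    (n₁ : BoxesMeet x₀ x₁ y₀ y₁ a b₁) (n₂ : BoxesMeet x₀ x₁ y₀ y₁ a b₂) :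
    BoxesMeet x₀ x₁ y₀ y₁ a b := by
  obtain ⟨p1, p2, p3, p4⟩ := m₁
  obtain ⟨q1, q2, q3, q4⟩ := m₂
  obtain ⟨r1, r2, r3, r4⟩ := n₁
  obtain ⟨s1, s2, s3, s4⟩ := n₂
  simp only [not_and_or, not_le] at h₁ h₂ k₁ k₂
  refine ⟨?_, ?_, ?_, ?_⟩ <;> by_contra! h
  · rcases h₂ with h₂ | h₂ <;> rcases k₂ with k₂ | k₂ <;>
      linarith [hx a, hx b, hy a, hy b]
  · rcases h₁ with h₁ | h₁ <;> rcases k₁ with k₁ | k₁ <;>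
      linarith [hx a, hx b, hy a, hy b]
  · rcases h₂ with h₂ | h₂ <;> rcases k₁ with k₁ | k₁ <;>
      linarith [hx a, hx b, hy a, hy b]
  · rcases h₁ with h₁ | h₁ <;> rcases k₂ with k₂ | k₂ <;>
      linarith [hx a, hx b, hy a, hy b]

/-- A nondegenerate interval `[l, h]` containing `N` and containing no element of `F` outside the
convex hull of `N` (in particular no element of `F` at all if `N` is empty). -/
lemma exists_hull (F N : Finset ℝ) : ∃ l h : ℝ, l < h ∧ (∀ n ∈ N, l ≤ n ∧ n ≤ h) ∧
    ∀ y ∈ F, l ≤ y → y ≤ h → (∃ n ∈ N, n ≤ y) ∧ ∃ n ∈ N, y ≤ n := by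
  classical
  obtain ⟨l, hl1, hl2⟩ := Order.exists_between_finsets (F.filter fun y => ∀ n ∈ N, y < n) N
    (fun x hx y hy => (Finset.mem_filter.1 hx).2 y hy)
  have hl : ∀ y ∈ F, l ≤ y → ∃ n ∈ N, n ≤ y := by
    intro y hy hly
    by_contra! hc
    exact (hl1 y (Finset.mem_filter.2 ⟨hy, hc⟩)).not_ge hly
  rcases N.eq_empty_or_nonempty with rfl | ⟨n₀, hn₀⟩
  · refine ⟨l, l + 1, by linarith, by simp, fun y hy hly _ => ?_⟩
    simpa using hl y hy hly
  · obtain ⟨h, hh1, hh2⟩ := Order.exists_between_finsets N (F.filter fun y => ∀ n ∈ N, n < y)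
      (fun x hx y hy => (Finset.mem_filter.1 hy).2 x hx)
    refine ⟨l, h, (hl2 _ hn₀).trans (hh1 _ hn₀), fun n hn => ⟨(hl2 n hn).le, (hh1 n hn).le⟩,
      fun y hy hly hyh => ⟨hl y hy hly, ?_⟩⟩
    by_contra! hc
    exact (hh2 y (Finset.mem_filter.2 ⟨hy, hc⟩)).not_ge hyh

lemma mem_segment_iff_of_axisParallel {e : Pt × Pt} (he : AxisParallelSeg e) (p : Pt) :
    p ∈ segment ℝ e.1 e.2 ↔
      (min e.1.1 e.2.1 ≤ p.1 ∧ p.1 ≤ max e.1.1 e.2.1) ∧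
        (min e.1.2 e.2.2 ≤ p.2 ∧ p.2 ≤ max e.1.2 e.2.2) := by
  obtain ⟨⟨a, b⟩, ⟨c, d⟩⟩ := e
  obtain ⟨x, y⟩ := p
  rcases he with h | h
  · dsimp only at h
    subst h
    rw [← Prod.image_mk_segment_right, segment_eq_uIcc]
    simp only [mem_image, mem_uIcc, Prod.mk.injEq, min_self, max_self]
    grind
  · dsimp only at h
    subst h
    rw [← Prod.image_mk_segment_left, segment_eq_uIcc]
    simp only [mem_image, mem_uIcc, Prod.mk.injEq, min_self, max_self]
    grind

lemma segments_meet_iff {d e : Pt × Pt} (hd : AxisParallelSeg d) (he : AxisParallelSeg e) :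
    (segment ℝ d.1 d.2 ∩ segment ℝ e.1 e.2).Nonempty ↔
      BoxesMeet (fun e : Pt × Pt => min e.1.1 e.2.1) (fun e => max e.1.1 e.2.1)
        (fun e => min e.1.2 e.2.2) (fun e => max e.1.2 e.2.2) d e := by
  simp only [Set.Nonempty, mem_inter_iff, mem_segment_iff_of_axisParallel hd,
    mem_segment_iff_of_axisParallel he, BoxesMeet]
  constructor
  · rintro ⟨p, ⟨⟨h1, h2⟩, h3, h4⟩, ⟨h5, h6⟩, h7, h8⟩
    exact ⟨h1.trans h6, h5.trans h2, h3.trans h8, h7.trans h4⟩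
  · rintro ⟨h1, h2, h3, h4⟩
    refine ⟨(max (min d.1.1 d.2.1) (min e.1.1 e.2.1), max (min d.1.2 d.2.2) (min e.1.2 e.2.2)),
      ⟨⟨le_max_left _ _, max_le min_le_max h2⟩, le_max_left _ _, max_le min_le_max h4⟩,
      ⟨le_max_right _ _, max_le h1 min_le_max⟩, le_max_right _ _, max_le h3 min_le_max⟩

lemma mem_segment_horizontal {l h y : ℝ} (hlh : l < h) (p : Pt) :
    p ∈ segment ℝ ((l, y) : Pt) (h, y) ↔ (l ≤ p.1 ∧ p.1 ≤ h) ∧ p.2 = y := by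
  rw [mem_segment_iff_of_axisParallel (e := ((l, y), (h, y))) (Or.inr rfl)]
  simp only [min_self, max_self, min_eq_left hlh.le, max_eq_right hlh.le]
  grind

lemma mem_segment_vertical {l h x : ℝ} (hlh : l < h) (p : Pt) :
    p ∈ segment ℝ ((x, l) : Pt) (x, h) ↔ p.1 = x ∧ (l ≤ p.2 ∧ p.2 ≤ h) := by
  rw [mem_segment_iff_of_axisParallel (e := ((x, l), (x, h))) (Or.inl rfl)]
  simp only [min_self, max_self, min_eq_left hlh.le, max_eq_right hlh.le]
  grind

/-- A bipartite graph has a `B_0`-VPG representation (horizontal and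
vertical segments, overlaps of parallel segments allowed) if and only if it has a grid
intersection representation (horizontal and vertical segments where no two segments of
the same orientation share a point). -/
theorem bipartite_B0_VPG_iff_grid_intersection {V : Type} [Fintype V] (G : SimpleGraph V)
    (hbip : ∃ A : Set V, ∀ u v : V, G.Adj u v → ((u ∈ A ∧ v ∉ A) ∨ (u ∉ A ∧ v ∈ A))) :
    (∃ S : V → Pt × Pt, (∀ v, (S v).1 ≠ (S v).2) ∧ (∀ v, AxisParallelSeg (S v)) ∧
        SegRep G S)
    ↔
    (∃ S : V → Pt × Pt, (∀ v, (S v).1 ≠ (S v).2) ∧ (∀ v, AxisParallelSeg (S v)) ∧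
        SegRep G S ∧
        (∀ u v : V, u ≠ v →
          ((((S u).1.2 = (S u).2.2 ∧ (S v).1.2 = (S v).2.2) →
            segment ℝ (S u).1 (S u).2 ∩ segment ℝ (S v).1 (S v).2 = ∅) ∧
           (((S u).1.1 = (S u).2.1 ∧ (S v).1.1 = (S v).2.1) →
            segment ℝ (S u).1 (S u).2 ∩ segment ℝ (S v).1 (S v).2 = ∅)))) := by
  classical
  refine ⟨?_, fun ⟨S, h1, h2, h3, _⟩ => ⟨S, h1, h2, h3⟩⟩
  rintro ⟨T, -, hTax, hT⟩
  obtain ⟨A, hA⟩ := hbip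
  obtain ⟨x₀, x₁, y₀, y₁, hx, hy, hmeet⟩ : ∃ x₀ x₁ y₀ y₁ : V → ℝ, (∀ v, x₀ v ≤ x₁ v) ∧
      (∀ v, y₀ v ≤ y₁ v) ∧ ∀ u v, u ≠ v → (BoxesMeet x₀ x₁ y₀ y₁ u v ↔ G.Adj u v) :=
    ⟨fun v => min (T v).1.1 (T v).2.1, fun v => max (T v).1.1 (T v).2.1,
      fun v => min (T v).1.2 (T v).2.2, fun v => max (T v).1.2 (T v).2.2,
      fun _ => min_le_max, fun _ => min_le_max,
      fun u v huv => (segments_meet_iff (hTax u) (hTax v)).symm.trans (hT u v huv)⟩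
  obtain ⟨f, finj, hf⟩ := exists_southwest_order x₀ x₁ y₀ y₁ hx hy
    (Finset.univ.filter (· ∈ A)) (by
      intro u hu v hv huv h
      simp only [Finset.mem_filter, Finset.mem_univ, true_and] at hu hv
      have := hA u v ((hmeet u v huv).1 h)
      tauto)
  -- reflecting the first coordinate turns the south-west order into a south-east order
  obtain ⟨g, ginj, hg⟩ := exists_southwest_order (fun v => -x₁ v) (fun v => -x₀ v) y₀ y₁
    (fun v => neg_le_neg (hx v)) hy (Finset.univ.filter (· ∉ A)) (by
      rintro u hu v hv huv ⟨h1, h2, h3, h4⟩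
      simp only [Finset.mem_filter, Finset.mem_univ, true_and] at hu hv
      have := hA u v ((hmeet u v huv).1 ⟨neg_le_neg_iff.1 h2, neg_le_neg_iff.1 h1, h3, h4⟩)
      tauto)
  simp only [Finset.mem_filter, Finset.mem_univ, true_and, neg_le_neg_iff] at finj hf ginj hg
  have hull : ∀ (k : V → ℝ) (v : V), ∃ l h : ℝ, l < h ∧
      (∀ w, G.Adj v w → l ≤ k w ∧ k w ≤ h) ∧
      ∀ z, l ≤ k z → k z ≤ h → (∃ w, G.Adj v w ∧ k w ≤ k z) ∧ ∃ w, G.Adj v w ∧ k z ≤ k w := by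
    intro k v
    obtain ⟨l, h, hlh, h1, h2⟩ := exists_hull (Finset.univ.image k)
      ((Finset.univ.filter (G.Adj v)).image k)
    refine ⟨l, h, hlh, fun w hw => h1 _ (Finset.mem_image_of_mem _ (by simpa using hw)),
      fun z hz1 hz2 => ?_⟩
    simpa using h2 (k z) (Finset.mem_image_of_mem _ (Finset.mem_univ z)) hz1 hz2
  choose l h hlh hin hout using hull
  have cross : ∀ a b, a ∈ A → b ∉ A → ((l g a ≤ g b ∧ g b ≤ h g a) ∧
      (l f b ≤ f a ∧ f a ≤ h f b) ↔ G.Adj a b) := by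
    intro a b ha hb
    refine ⟨?_, fun hab => ⟨hin g a b hab, hin f b a hab.symm⟩⟩
    rintro ⟨⟨e1, e2⟩, e3, e4⟩
    obtain ⟨⟨b₁, hb₁, hgb₁⟩, b₂, hb₂, hgb₂⟩ := hout g a b e1 e2
    obtain ⟨⟨a₁, ha₁, hfa₁⟩, a₂, ha₂, hfa₂⟩ := hout f b a e3 e4
    by_contra hab
    have hab' : a ≠ b := fun e => hb (e ▸ ha)
    have memA : ∀ w, G.Adj b w → w ∈ A ∧ w ≠ a := fun w hw =>
      ⟨by have := hA b w hw; tauto, by rintro rfl; exact hab hw.symm⟩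
    have memB : ∀ w, G.Adj a w → w ∉ A ∧ w ≠ b := fun w hw =>
      ⟨by have := hA a w hw; tauto, by rintro rfl; exact hab hw⟩
    refine hab ((hmeet a b hab').1 (meet_of_between hx hy (a₁ := a₁) (a₂ := a₂) (b₁ := b₁)
      (b₂ := b₂) ?_ ?_ ?_ ?_ ((hmeet _ _ ha₁.ne).2 ha₁) ((hmeet _ _ ha₂.ne).2 ha₂)
      ((hmeet _ _ hb₁.ne).2 hb₁) ((hmeet _ _ hb₂.ne).2 hb₂)))
    · rintro ⟨i, j⟩
      exact (hf a ha a₁ (memA _ ha₁).1 (memA _ ha₁).2.symm i j).not_ge hfa₁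
    · rintro ⟨i, j⟩
      exact (hf a₂ (memA _ ha₂).1 a ha (memA _ ha₂).2 i j).not_ge hfa₂
    · rintro ⟨i, j⟩
      exact (hg b hb b₁ (memB _ hb₁).1 (memB _ hb₁).2.symm i j).not_ge hgb₁
    · rintro ⟨i, j⟩
      exact (hg b₂ (memB _ hb₂).1 b hb (memB _ hb₂).2 i j).not_ge hgb₂
  let S : V → Pt × Pt := fun v =>
    if v ∈ A then ((l g v, f v), (h g v, f v)) else ((g v, l f v), (g v, h f v))
  have SA : ∀ v, v ∈ A → S v = ((l g v, f v), (h g v, f v)) := fun v hv => if_pos hv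
  have SB : ∀ v, v ∉ A → S v = ((g v, l f v), (g v, h f v)) := fun v hv => if_neg hv
  have disjA : ∀ u v, u ∈ A → v ∈ A → u ≠ v →
      segment ℝ (S u).1 (S u).2 ∩ segment ℝ (S v).1 (S v).2 = ∅ := by
    intro u v hu hv huv
    rw [SA u hu, SA v hv, Set.eq_empty_iff_forall_notMem]
    rintro p ⟨h1, h2⟩
    rw [mem_segment_horizontal (hlh g _)] at h1 h2
    exact huv (finj u hu v hv (h1.2.symm.trans h2.2))
  have disjB : ∀ u v, u ∉ A → v ∉ A → u ≠ v →
      segment ℝ (S u).1 (S u).2 ∩ segment ℝ (S v).1 (S v).2 = ∅ := by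
    intro u v hu hv huv
    rw [SB u hu, SB v hv, Set.eq_empty_iff_forall_notMem]
    rintro p ⟨h1, h2⟩
    rw [mem_segment_vertical (hlh f _)] at h1 h2
    exact huv (ginj u hu v hv (h1.1.symm.trans h2.1))
  have meetAB : ∀ a b, a ∈ A → b ∉ A →
      ((segment ℝ (S a).1 (S a).2 ∩ segment ℝ (S b).1 (S b).2).Nonempty ↔ G.Adj a b) := by
    intro a b ha hb
    rw [← cross a b ha hb, SA a ha, SB b hb]
    simp only [Set.Nonempty, mem_inter_iff, mem_segment_horizontal (hlh g _),
      mem_segment_vertical (hlh f _)]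
    constructor
    · rintro ⟨p, ⟨h1, h2⟩, h3, h4⟩
      rw [h3] at h1
      rw [h2] at h4
      exact ⟨h1, h4⟩
    · rintro ⟨h1, h2⟩
      exact ⟨(g b, f a), ⟨h1, rfl⟩, rfl, h2⟩
  refine ⟨S, fun v => ?_, fun v => ?_, fun u v huv => ?_, fun u v huv => ?_⟩
  · by_cases hv : v ∈ A
    · rw [SA v hv]
      exact fun e => (hlh g v).ne (congrArg Prod.fst e)
    · rw [SB v hv]
      exact fun e => (hlh f v).ne (congrArg Prod.snd e)
  · by_cases hv : v ∈ A
    · rw [SA v hv]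
      exact Or.inr rfl
    · rw [SB v hv]
      exact Or.inl rfl
  · by_cases hu : u ∈ A <;> by_cases hv : v ∈ A
    · rw [disjA u v hu hv huv]
      have := hA u v
      simp only [Set.not_nonempty_empty, false_iff]
      tauto
    · exact meetAB u v hu hv
    · rw [Set.inter_comm, G.adj_comm]
      exact meetAB v u hv hu
    · rw [disjB u v hu hv huv]
      have := hA u v
      simp only [Set.not_nonempty_empty, false_iff]
      tauto
  · -- nondegeneracy makes `A` exactly the set of horizontal segments
    have horiz : ∀ w, (S w).1.2 = (S w).2.2 → w ∈ A := by
      intro w hw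
      by_contra hwA
      rw [SB w hwA] at hw
      exact (hlh f w).ne hw
    have vert : ∀ w, (S w).1.1 = (S w).2.1 → w ∉ A := by
      intro w hw hwA
      rw [SA w hwA] at hw
      exact (hlh g w).ne hw
    exact ⟨fun e => disjA u v (horiz u e.1) (horiz v e.2) huv,
      fun e => disjB u v (vert u e.1) (vert v e.2) huv⟩
end

section
/- Let k ≥ 1 and let γ and δ be two simple axis-parallel (rectilinear) piecewise-linear curves in the plane. Suppose there are k+1 points p₁, …, p_{k+1} that lie on both γ and δ and appear in this same order along both curves, and suppose that for each i ∈ {1, …, k} the subcurve of γ between p_i and p_{i+1} is not identical to the subcurve of δ between p_i and p_{i+1}. Then the total number of bends of γ plus the number of bends of δ is at least 2k. In particular, γ and δ cannot both have at most k−1 bends. -/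
/-!
Each of the `k` pairs of subcurves between consecutive common points already accounts for two
bends strictly inside it, and the open parameter intervals between consecutive common points are
disjoint, so these bends add up to at least `2k`.

The local claim: let two injective rectilinear arcs join `a` to `b` with at most one interior
breakpoint in total. Then one of them is a single axis-parallel segment, say a horizontal one, and
`a`, `b` have the same height. The other one consists of at most two axis-parallel pieces. If
both are vertical, then `a = b`; if exactly one is, then the breakpoint coincides with an endpoint
and the vertical piece is degenerate. So it lies on the same horizontal line
(`horizontal_of_one_break`). An injective continuous arc in a line traces exactly the interval
between its endpoints (`image_Icc_of_injOn`), so the two arcs have the same trace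
(`image_eq_of_few_breaks`).
-/

open Set Metric

/-! ### Pieces of a rectilinear curve -/

/-- One of the two coordinates of `γ` is constant on `[a, b]`. -/
def AxisConst (γ : ℝ → Pt) (a b : ℝ) : Prop :=
  (∀ x ∈ Icc a b, (γ x).1 = (γ a).1) ∨ (∀ x ∈ Icc a b, (γ x).2 = (γ a).2)

lemma AxisAffOn.axisConst {γ : ℝ → Pt} {s t a b : ℝ} (h : AxisAffOn γ s t)
    (hsa : s ≤ a) (hbt : b ≤ t) (hab : a ≤ b) : AxisConst γ a b := by
  obtain ⟨c, d, hd, hγ⟩ := h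
  have ha : a ∈ Icc s t := ⟨hsa, hab.trans hbt⟩
  rcases hd with hd | hd
  · left
    intro x hx
    rw [hγ x ⟨hsa.trans hx.1, hx.2.trans hbt⟩, hγ a ha]
    simp [hd]
  · right
    intro x hx
    rw [hγ x ⟨hsa.trans hx.1, hx.2.trans hbt⟩, hγ a ha]
    simp [hd]

lemma AxisAffOn.continuousOn {γ : ℝ → Pt} {s t : ℝ} (h : AxisAffOn γ s t) :
    ContinuousOn γ (Icc s t) := by
  obtain ⟨c, d, -, hγ⟩ := h
  exact ContinuousOn.congr (by fun_prop) hγ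

lemma continuousOn_of_pieces {n : ℕ} {γ : ℝ → Pt} {t : Fin (n + 1) → ℝ} (hm : Monotone t)
    (h : ∀ i : Fin n, AxisAffOn γ (t i.castSucc) (t i.succ)) (j : Fin (n + 1)) :
    ContinuousOn γ (Icc (t 0) (t j)) := by
  induction j using Fin.induction with
  | zero => simp
  | succ i ih =>
    rw [← Icc_union_Icc_eq_Icc (hm (Fin.zero_le i.castSucc)) (hm (Fin.castSucc_lt_succ (i := i)).le)]
    exact ih.union_of_isClosed (h i).continuousOn isClosed_Icc isClosed_Icc

/-- An interval containing no breakpoint in its interior lies in a single piece. -/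
lemma axisConst_of_no_break {n : ℕ} {γ : ℝ → Pt} {t : Fin (n + 1) → ℝ} (h0 : t 0 = 0)
    (h1 : t (Fin.last n) = 1)
    (h : ∀ i : Fin n, AxisAffOn γ (t i.castSucc) (t i.succ)) {a b : ℝ} (hab : a < b)
    (ha : 0 ≤ a) (hb : b ≤ 1) (hno : ∀ j, t j ∉ Ioo a b) : AxisConst γ a b := by
  by_contra hcon
  -- Walking along the breakpoints, none of them can get past `a`, although the last one is `1`.
  have key : ∀ j : Fin (n + 1), t j ≤ a := by
    intro j
    induction j using Fin.induction with
    | zero => rw [h0]; exact ha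
    | succ i ih =>
      by_contra hlt
      push Not at hlt
      have hbi : b ≤ t i.succ := by
        by_contra hlt'
        exact hno _ ⟨hlt, not_le.mp hlt'⟩
      exact hcon ((h i).axisConst ih hbi hab.le)
  have := key (Fin.last n)
  linarith

/-- An interval with at most one breakpoint in its interior splits into two pieces
(the second one degenerate if there is no breakpoint). -/
lemma exists_split_of_one_break {n : ℕ} {γ : ℝ → Pt} {t : Fin (n + 1) → ℝ} (h0 : t 0 = 0)
    (h1 : t (Fin.last n) = 1)
    (h : ∀ i : Fin n, AxisAffOn γ (t i.castSucc) (t i.succ)) {a b : ℝ} (hab : a < b)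
    (ha : 0 ≤ a) (hb : b ≤ 1) (hone : ∀ j j', t j ∈ Ioo a b → t j' ∈ Ioo a b → j = j') :
    ∃ u ∈ Icc a b, AxisConst γ a u ∧ AxisConst γ u b := by
  by_cases hno : ∀ j, t j ∉ Ioo a b
  · refine ⟨b, ⟨hab.le, le_rfl⟩, axisConst_of_no_break h0 h1 h hab ha hb hno, Or.inl ?_⟩
    intro x hx
    rw [le_antisymm hx.2 hx.1]
  · push Not at hno
    obtain ⟨j, hj⟩ := hno
    refine ⟨t j, ⟨hj.1.le, hj.2.le⟩,
      axisConst_of_no_break h0 h1 h hj.1 ha (hj.2.le.trans hb) ?_,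
      axisConst_of_no_break h0 h1 h hj.2 (ha.trans hj.1.le) hb ?_⟩
    · intro j' hj'
      have := hone j j' hj ⟨hj'.1, hj'.2.trans hj.2⟩
      subst this
      exact lt_irrefl _ hj'.2
    · intro j' hj'
      have := hone j j' hj ⟨hj.1.trans hj'.1, hj'.2⟩
      subst this
      exact lt_irrefl _ hj'.1

/-! ### Arcs with few bends -/

lemma image_Icc_of_injOn {f : ℝ → ℝ} {a b : ℝ} (hab : a ≤ b) (hc : ContinuousOn f (Icc a b))
    (hi : InjOn f (Icc a b)) : f '' Icc a b = uIcc (f a) (f b) := by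
  apply Subset.antisymm
  · rintro _ ⟨x, hx, rfl⟩
    rcases hc.strictMonoOn_of_injOn_Icc' hab hi with hf | hf
    · exact Icc_subset_uIcc ⟨hf.monotoneOn (left_mem_Icc.2 hab) hx hx.1,
        hf.monotoneOn hx (right_mem_Icc.2 hab) hx.2⟩
    · exact Icc_subset_uIcc' ⟨hf.antitoneOn hx (right_mem_Icc.2 hab) hx.2,
        hf.antitoneOn (left_mem_Icc.2 hab) hx hx.1⟩
  · have := intermediate_value_uIcc (a := a) (b := b) (f := f) (by rwa [uIcc_of_le hab])
    rwa [uIcc_of_le hab] at this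

/-- An injective continuous horizontal arc traces the horizontal segment between its endpoints. -/
lemma image_of_horizontal {γ : ℝ → Pt} {a b : ℝ} (hab : a ≤ b) (hc : ContinuousOn γ (Icc a b))
    (hi : InjOn γ (Icc a b)) (hh : ∀ x ∈ Icc a b, (γ x).2 = (γ a).2) :
    γ '' Icc a b = uIcc (γ a).1 (γ b).1 ×ˢ {(γ a).2} := by
  have hi' : InjOn (fun x => (γ x).1) (Icc a b) := by
    intro x hx y hy hxy
    exact hi hx hy (Prod.ext hxy ((hh x hx).trans (hh y hy).symm))
  rw [← image_Icc_of_injOn (f := fun x => (γ x).1) hab hc.fst hi']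
  ext ⟨u, v⟩
  constructor
  · rintro ⟨x, hx, hxe⟩
    refine ⟨⟨x, hx, by simp [hxe]⟩, ?_⟩
    have := hh x hx
    rw [hxe] at this
    exact this
  · rintro ⟨⟨x, hx, hxe⟩, hv⟩
    exact ⟨x, hx, Prod.ext hxe ((hh x hx).trans (mem_singleton_iff.1 hv).symm)⟩

/-- An injective arc with at most one bend whose endpoints have the same height is horizontal. -/
lemma horizontal_of_one_break {δ : ℝ → Pt} {a b u : ℝ} (hab : a < b) (hu : u ∈ Icc a b)
    (hi : InjOn δ (Icc a b)) (h1 : AxisConst δ a u) (h2 : AxisConst δ u b)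
    (he : (δ b).2 = (δ a).2) : ∀ x ∈ Icc a b, (δ x).2 = (δ a).2 := by
  have hA : a ∈ Icc a b := left_mem_Icc.2 hab.le
  have hB : b ∈ Icc a b := right_mem_Icc.2 hab.le
  have hau : u ∈ Icc a u := right_mem_Icc.2 hu.1
  have hub : b ∈ Icc u b := right_mem_Icc.2 hu.2
  rcases h1 with h1 | h1 <;> rcases h2 with h2 | h2
  · -- both pieces vertical: the endpoints coincide
    have : a = b := hi hA hB (Prod.ext ((h2 b hub).trans (h1 u hau)).symm he.symm)
    exact absurd this hab.ne
  · -- the first piece is vertical, hence degenerate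
    have : u = a := hi hu hA (Prod.ext (h1 u hau) ((h2 b hub).symm.trans he))
    subst this
    exact h2
  · -- the second piece is vertical, hence degenerate
    have : u = b := hi hu hB (Prod.ext (h2 b hub).symm ((h1 u hau).trans he.symm))
    subst this
    exact h1
  · intro x hx
    rcases le_total x u with hxu | hxu
    · exact h1 x ⟨hx.1, hxu⟩
    · exact (h2 x ⟨hxu, hx.2⟩).trans (h1 u hau)

lemma AxisConst.swap {γ : ℝ → Pt} {a b : ℝ} (h : AxisConst γ a b) :
    AxisConst (Prod.swap ∘ γ) a b := Or.symm h

lemma image_eq_of_horizontal {γ δ : ℝ → Pt} {a b a' b' u : ℝ} (hab : a < b) (hab' : a' < b')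
    (hc : ContinuousOn γ (Icc a b)) (hc' : ContinuousOn δ (Icc a' b'))
    (hi : InjOn γ (Icc a b)) (hi' : InjOn δ (Icc a' b'))
    (hA : γ a = δ a') (hB : γ b = δ b') (hγ : ∀ x ∈ Icc a b, (γ x).2 = (γ a).2)
    (hu : u ∈ Icc a' b') (h1 : AxisConst δ a' u) (h2 : AxisConst δ u b') :
    γ '' Icc a b = δ '' Icc a' b' := by
  have he : (δ b').2 = (δ a').2 := by
    rw [← hA, ← hB]
    exact hγ b (right_mem_Icc.2 hab.le)
  rw [image_of_horizontal hab.le hc hi hγ, image_of_horizontal hab'.le hc' hi'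
    (horizontal_of_one_break hab' hu hi' h1 h2 he), hA, hB]

/-- A straight arc and an arc with at most one bend, both injective and with common endpoints,
have the same trace. -/
lemma image_eq_of_few_breaks {γ δ : ℝ → Pt} {a b a' b' u : ℝ} (hab : a < b) (hab' : a' < b')
    (hc : ContinuousOn γ (Icc a b)) (hc' : ContinuousOn δ (Icc a' b'))
    (hi : InjOn γ (Icc a b)) (hi' : InjOn δ (Icc a' b'))
    (hA : γ a = δ a') (hB : γ b = δ b') (hγ : AxisConst γ a b)
    (hu : u ∈ Icc a' b') (h1 : AxisConst δ a' u) (h2 : AxisConst δ u b') :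
    γ '' Icc a b = δ '' Icc a' b' := by
  rcases hγ with hγ | hγ
  · have := image_eq_of_horizontal (γ := Prod.swap ∘ γ) (δ := Prod.swap ∘ δ) hab hab'
      (continuous_swap.comp_continuousOn hc) (continuous_swap.comp_continuousOn hc')
      (Prod.swap_injective.comp_injOn hi) (Prod.swap_injective.comp_injOn hi')
      (congrArg Prod.swap hA) (congrArg Prod.swap hB) hγ hu h1.swap h2.swap
    rw [image_comp, image_comp] at this
    exact Prod.swap_injective.image_injective this
  · exact image_eq_of_horizontal hab hab' hc hc' hi hi' hA hB hγ hu h1 h2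

/-! ### Counting breakpoints -/

open Classical in
/-- The indices of the breakpoints of `t` lying strictly between `a` and `b`. -/
noncomputable def breaksIn {n : ℕ} (t : Fin (n + 1) → ℝ) (a b : ℝ) : Finset (Fin (n + 1)) :=
  Finset.univ.filter fun j => t j ∈ Ioo a b

lemma mem_breaksIn {n : ℕ} {t : Fin (n + 1) → ℝ} {a b : ℝ} {j : Fin (n + 1)} :
    j ∈ breaksIn t a b ↔ t j ∈ Ioo a b := by
  simp [breaksIn]

/-- The open parameter intervals are disjoint and miss the two extreme breakpoints, so at most
`b` breakpoints are counted. -/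
lemma sum_card_breaksIn_le {b k : ℕ} {t : Fin (b + 1 + 1) → ℝ} (h0 : t 0 = 0)
    (h1 : t (Fin.last (b + 1)) = 1) {s : Fin (k + 1) → ℝ} (hs : StrictMono s)
    (hs01 : ∀ i, s i ∈ Icc (0 : ℝ) 1) :
    ∑ i : Fin k, (breaksIn t (s i.castSucc) (s i.succ)).card ≤ b := by
  classical
  have hdisj : ∀ i j : Fin k, i < j →
      Disjoint (breaksIn t (s i.castSucc) (s i.succ)) (breaksIn t (s j.castSucc) (s j.succ)) := by
    intro i j hij
    rw [Finset.disjoint_left]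
    intro x hx hx'
    rw [mem_breaksIn] at hx hx'
    have : s i.succ ≤ s j.castSucc := hs.monotone (by
      exact Fin.succ_le_castSucc_iff.2 hij)
    exact absurd (hx.2.trans_le this) hx'.1.not_gt
  rw [← Finset.card_biUnion]
  · have hsub : Finset.univ.biUnion (fun i : Fin k => breaksIn t (s i.castSucc) (s i.succ)) ⊆
        (Finset.univ.erase 0).erase (Fin.last (b + 1)) := by
      intro x hx
      obtain ⟨i, -, hx⟩ := Finset.mem_biUnion.1 hx
      rw [mem_breaksIn] at hx
      refine Finset.mem_erase.2 ⟨?_, Finset.mem_erase.2 ⟨?_, Finset.mem_univ _⟩⟩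
      · rintro rfl
        rw [h1] at hx
        exact absurd hx.2 (hs01 _).2.not_gt
      · rintro rfl
        rw [h0] at hx
        exact absurd hx.1 (hs01 _).1.not_gt
    refine (Finset.card_le_card hsub).trans_eq ?_
    have hne : Fin.last (b + 1) ≠ 0 := by simp [Fin.ext_iff]
    rw [Finset.card_erase_of_mem (Finset.mem_erase.2 ⟨hne, Finset.mem_univ _⟩),
      Finset.card_erase_of_mem (Finset.mem_univ _), Finset.card_univ, Fintype.card_fin]
    omega
  · intro i _ j _ hij
    rcases lt_or_gt_of_ne hij with h | h
    · exact hdisj i j h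
    · exact (hdisj j i h).symm

/-- Two subcurves with common endpoints and no breakpoint inside the first, at most one inside
the second, have the same trace. -/
lemma image_eq_of_card {n m : ℕ} {γ δ : ℝ → Pt} {c : Fin (n + 1) → ℝ} {d : Fin (m + 1) → ℝ}
    (hγi : InjOn γ (Icc 0 1)) (hδi : InjOn δ (Icc 0 1))
    (hc0 : c 0 = 0) (hc1 : c (Fin.last n) = 1) (hcm : Monotone c)
    (hγ : ∀ i : Fin n, AxisAffOn γ (c i.castSucc) (c i.succ))
    (hd0 : d 0 = 0) (hd1 : d (Fin.last m) = 1) (hdm : Monotone d)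
    (hδ : ∀ i : Fin m, AxisAffOn δ (d i.castSucc) (d i.succ))
    {a b a' b' : ℝ} (hab : a < b) (hab' : a' < b') (ha : a ∈ Icc (0 : ℝ) 1)
    (hb : b ∈ Icc (0 : ℝ) 1) (ha' : a' ∈ Icc (0 : ℝ) 1) (hb' : b' ∈ Icc (0 : ℝ) 1)
    (hA : γ a = δ a') (hB : γ b = δ b')
    (h0 : (breaksIn c a b).card = 0) (h1 : (breaksIn d a' b').card ≤ 1) :
    γ '' Icc a b = δ '' Icc a' b' := by
  have hsub : Icc a b ⊆ Icc 0 1 := Icc_subset_Icc ha.1 hb.2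
  have hsub' : Icc a' b' ⊆ Icc 0 1 := Icc_subset_Icc ha'.1 hb'.2
  have hγc : ContinuousOn γ (Icc 0 1) := by
    have := continuousOn_of_pieces hcm hγ (Fin.last n)
    rwa [hc0, hc1] at this
  have hδc : ContinuousOn δ (Icc 0 1) := by
    have := continuousOn_of_pieces hdm hδ (Fin.last m)
    rwa [hd0, hd1] at this
  obtain ⟨u, hu, h1, h2⟩ := exists_split_of_one_break hd0 hd1 hδ hab' ha'.1 hb'.2
    (fun j j' hj hj' => Finset.card_le_one.1 h1 j (mem_breaksIn.2 hj) j' (mem_breaksIn.2 hj'))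
  refine image_eq_of_few_breaks hab hab' (hγc.mono hsub) (hδc.mono hsub') (hγi.mono hsub)
    (hδi.mono hsub') hA hB (axisConst_of_no_break hc0 hc1 hγ hab ha.1 hb.2 ?_) hu h1 h2
  intro j hj
  rw [← mem_breaksIn, Finset.card_eq_zero.1 h0] at hj
  exact Finset.notMem_empty _ hj

/-- Let `γ, δ` be simple rectilinear curves having `k+1` common points
`p 0, …, p k` appearing in the same order along both curves, such that for each `i` the
subcurve of `γ` between consecutive common points differs from the corresponding subcurve
of `δ`.  Then the total number of bends of `γ` and `δ` is at least `2k` (a curve made of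
at most `b+1` axis-parallel segments has at most `b` bends); in particular `γ` and `δ`
cannot both have at most `k-1` bends. -/
theorem sausage_bend_lower_bound (k : ℕ) (hk : 1 ≤ k) (γ δ : ℝ → Pt)
    (hγ : IsRectCurve γ) (hδ : IsRectCurve δ)
    (p : Fin (k + 1) → Pt) (s t : Fin (k + 1) → ℝ)
    (hs : StrictMono s) (ht : StrictMono t)
    (hs01 : ∀ i, s i ∈ Icc (0:ℝ) 1) (ht01 : ∀ i, t i ∈ Icc (0:ℝ) 1)
    (hγs : ∀ i, γ (s i) = p i) (hδt : ∀ i, δ (t i) = p i)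
    (hdiff : ∀ i : Fin k,
      γ '' Icc (s i.castSucc) (s i.succ) ≠ δ '' Icc (t i.castSucc) (t i.succ)) :
    (∀ bγ bδ : ℕ, IsRectCurveN (bγ + 1) γ → IsRectCurveN (bδ + 1) δ → 2 * k ≤ bγ + bδ) ∧
    ¬(IsKBendCurve (k - 1) γ ∧ IsKBendCurve (k - 1) δ) := by
  have main : ∀ bγ bδ : ℕ, IsRectCurveN (bγ + 1) γ → IsRectCurveN (bδ + 1) δ →
      2 * k ≤ bγ + bδ := by
    rintro bγ bδ ⟨hγi, c, hc0, hc1, hcm, hγc⟩ ⟨hδi, d, hd0, hd1, hdm, hδd⟩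
    have hloc : ∀ i : Fin k, 2 ≤ (breaksIn c (s i.castSucc) (s i.succ)).card +
        (breaksIn d (t i.castSucc) (t i.succ)).card := by
      intro i
      by_contra hlt
      have hsi : s i.castSucc < s i.succ := hs Fin.castSucc_lt_succ
      have hti : t i.castSucc < t i.succ := ht Fin.castSucc_lt_succ
      have hA : γ (s i.castSucc) = δ (t i.castSucc) := (hγs _).trans (hδt _).symm
      have hB : γ (s i.succ) = δ (t i.succ) := (hγs _).trans (hδt _).symm
      rcases Nat.eq_zero_or_pos (breaksIn c (s i.castSucc) (s i.succ)).card with h | h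
      · exact hdiff i (image_eq_of_card hγi hδi hc0 hc1 hcm hγc hd0 hd1 hdm hδd hsi hti
          (hs01 _) (hs01 _) (ht01 _) (ht01 _) hA hB h (by omega))
      · exact hdiff i (image_eq_of_card hδi hγi hd0 hd1 hdm hδd hc0 hc1 hcm hγc hti hsi
          (ht01 _) (ht01 _) (hs01 _) (hs01 _) hA.symm hB.symm (by omega) (by omega)).symm
    have hsum := Finset.sum_le_sum fun i (_ : i ∈ (Finset.univ : Finset (Fin k))) => hloc i
    rw [Finset.sum_add_distrib, Finset.sum_const, Finset.card_univ, Fintype.card_fin,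
      smul_eq_mul] at hsum
    have hγb := sum_card_breaksIn_le hc0 hc1 hs hs01
    have hδb := sum_card_breaksIn_le hd0 hd1 ht ht01
    omega
  refine ⟨main, fun h => ?_⟩
  have := main _ _ h.1 h.2
  omega
end
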